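/- arXiv:2002.09294 — 4 statements merged into one kernel-verified Lean document; each statement's English description precedes it below -/
import Mathlib

section
/- Let X be a standard Borel space, E a countable Borel equivalence relation on X, and ρ : E → (0,∞) a smooth Borel cocycle. Then there is an E-invariant Borel set B ⊆ X such that E restricted to the complement of B is smooth and there is a strictly (ρ restricted to E|B)-increasing Borel automorphism of B. -/
open MeasureTheory Set ENNReal

namespace CocycleNadkarni

variable {X : Type*} {Γ : Type*}

/-- The `ρ`-size of `Y` relative to the point `z`: `∑_{y ∈ Y} ρ(y, z)`. -/
noncomputable def eSize (ρ : X → X → ℝ) (Y : Set X) (z : X) : ℝ≥0∞ :=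
  ∑' y : Y, ENNReal.ofReal (ρ y z)

/-- The `ρ`-size of `Y` relative to the set `Z`, computed at the point `z`. -/
noncomputable def relSize (ρ : X → X → ℝ) (Y Z : Set X) (z : X) : ℝ≥0∞ :=
  eSize ρ Y z / eSize ρ Z z

/-- Real-valued `ρ`-size (used for finite sets). -/
noncomputable def rSize (ρ : X → X → ℝ) (Y : Set X) (z : X) : ℝ :=
  ∑' y : Y, ρ y z

/-- `∫_C f dμ^ρ_S`, computed at the point `z`. -/
noncomputable def avgOn (ρ : X → X → ℝ) (f : X → ℝ) (S C : Set X) (z : X) : ℝ :=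
  (∑' y : ↥(S ∩ C), f y * ρ y z) / rSize ρ S z

/-- countable Borel equivalence relation -/
def IsCBER [MeasurableSpace X] (E : X → X → Prop) : Prop :=
  Equivalence E ∧ MeasurableSet {p : X × X | E p.1 p.2} ∧ ∀ x : X, {y | E x y}.Countable

/-- Borel cocycle `ρ : E → (0, ∞)` (as a total function whose values off `E` are irrelevant). -/
def IsCocycle [MeasurableSpace X] (E : X → X → Prop) (ρ : X → X → ℝ) : Prop :=
  Measurable (fun p : X × X => ρ p.1 p.2) ∧
    (∀ ⦃x y : X⦄, E x y → 0 < ρ x y) ∧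
    ∀ ⦃x y z : X⦄, E x y → E y z → ρ x z = ρ x y * ρ y z

/-- Borel cocycle into a group `Γ`. -/
def IsGrpCocycle [MeasurableSpace X] [Group Γ] [MeasurableSpace Γ]
    (E : X → X → Prop) (ρ : X → X → Γ) : Prop :=
  Measurable (fun p : X × X => ρ p.1 p.2) ∧
    ∀ ⦃x y z : X⦄, E x y → E y z → ρ x z = ρ x y * ρ y z

/-- finite Borel subequivalence relation of `E` -/
def IsFinSubequiv [MeasurableSpace X] (E F : X → X → Prop) : Prop :=
  Equivalence F ∧ MeasurableSet {p : X × X | F p.1 p.2} ∧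
    (∀ ⦃x y : X⦄, F x y → E x y) ∧ ∀ x : X, {y | F x y}.Finite

/-- finite Borel subequivalence relation of `E` restricted to `W` (extended by the diagonal). -/
def IsFinSubequivOn [MeasurableSpace X] (E : X → X → Prop) (W : Set X)
    (F : X → X → Prop) : Prop :=
  Equivalence F ∧ MeasurableSet {p : X × X | F p.1 p.2} ∧
    (∀ ⦃x y : X⦄, F x y → x = y ∨ (E x y ∧ x ∈ W ∧ y ∈ W)) ∧ ∀ x : X, {y | F x y}.Finite

/-- `ρ`-invariance of a Borel measure. -/
def IsInvariant [MeasurableSpace X] (E : X → X → Prop) (ρ : X → X → ℝ)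
    (μ : Measure X) : Prop :=
  ∀ T : X ≃ᵐ X, (∀ x, E (T x) x) → ∀ B : Set X, MeasurableSet B →
    μ (T '' B) = ∫⁻ x in B, ENNReal.ofReal (ρ (T x) x) ∂μ

/-- invariance w.r.t. the restriction of `ρ` to a set `R` of pairs, via Borel injections
whose graphs are contained in `R⁻¹`. -/
def IsInvariantRel [MeasurableSpace X] (R : Set (X × X)) (ρ : X → X → ℝ)
    (μ : Measure X) : Prop :=
  ∀ (B : Set X) (T : X → X), MeasurableSet B → Measurable T → Set.InjOn T B →
    (∀ x ∈ B, ((T x, x) : X × X) ∈ R) →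
    μ (T '' B) = ∫⁻ x in B, ENNReal.ofReal (ρ (T x) x) ∂μ

/-- a Borel ℕ-coloring of the lacunarity digraph `G^ρ_Z`. -/
def HasColoring [MeasurableSpace X] (E : X → X → Prop) (ρ : X → X → Γ)
    (Z : Set Γ) : Prop :=
  ∃ c : X → ℕ, Measurable c ∧
    ∀ ⦃x y : X⦄, x ≠ y → E x y → ρ x y ∈ Z → c x ≠ c y

/-- smoothness of the cocycle `ρ` restricted to `E` restricted to `W`. -/
def SmoothOn [MeasurableSpace X] (E : X → X → Prop) (ρ : X → X → ℝ)
    (W : Set X) : Prop :=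
  ∃ U : Set ℝ, IsOpen U ∧ (1:ℝ) ∈ U ∧ U ⊆ Set.Ioi 0 ∧
    ∃ c : X → ℕ, Measurable c ∧
      ∀ ⦃x y : X⦄, x ∈ W → y ∈ W → x ≠ y → E x y → ρ x y ∈ U → c x ≠ c y

/-- smoothness of the cocycle `ρ` on `E`. -/
def Smooth [MeasurableSpace X] (E : X → X → Prop) (ρ : X → X → ℝ) : Prop :=
  SmoothOn E ρ Set.univ

/-- `E`-invariance of a set. -/
def EInvariant (E : X → X → Prop) (B : Set X) : Prop :=
  ∀ ⦃x y : X⦄, E x y → x ∈ B → y ∈ B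

/-- a compression of `ρ` over the finite subequivalence relation `F` of `E`. -/
def CompressionOver [MeasurableSpace X] (E F : X → X → Prop) (ρ : X → X → ℝ)
    (φ : X → X) : Prop :=
  (∀ x, E x (φ x)) ∧
  (∀ x : X, relSize ρ (φ ⁻¹' {y | F y x}) {y | F y x} x ≤ 1) ∧
  (∀ x : X, ∃ y, E x y ∧ relSize ρ (φ ⁻¹' {z | F z y}) {z | F z y} y < 1)

/-- a compression of the quotient of `ρ | E | W` by the finite subequivalence relation given
by the setoid `s`, expressed via representatives. -/
def QuotCompressionOn [MeasurableSpace X] (E : X → X → Prop) (ρ : X → X → ℝ)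
    (W : Set X) (s : Setoid X) (φ : Quotient s → Quotient s) : Prop :=
  (∀ ⦃x : X⦄, x ∈ W → ∀ y : X, φ (Quotient.mk s x) = Quotient.mk s y → (E x y ∧ y ∈ W)) ∧
  (∀ ⦃x : X⦄, x ∈ W →
    relSize ρ {y | y ∈ W ∧ φ (Quotient.mk s y) = Quotient.mk s x} {y | s.r y x} x ≤ 1) ∧
  (∀ ⦃x : X⦄, x ∈ W → ∃ y, y ∈ W ∧ E x y ∧
    relSize ρ {z | z ∈ W ∧ φ (Quotient.mk s z) = Quotient.mk s y} {z | s.r z y} y < 1)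


/-- `B` has `ρ`-density at least `ε` relative to `W`. -/
def HasDensityAtLeastOn [MeasurableSpace X] (E : X → X → Prop) (ρ : X → X → ℝ)
    (B W : Set X) (ε : ℝ) : Prop :=
  ∃ F : X → X → Prop, IsFinSubequivOn E W F ∧
    ∀ x ∈ W, ENNReal.ofReal ε ≤ relSize ρ (B ∩ {y | F y x}) {y | F y x} x

/-- `B` has positive `ρ`-density relative to `W`. -/
def HasPosDensityOn [MeasurableSpace X] (E : X → X → Prop) (ρ : X → X → ℝ)
    (B W : Set X) : Prop :=
  ∃ ε : ℝ, 0 < ε ∧ HasDensityAtLeastOn E ρ B W ε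

/-- `B` has σ-positive `ρ`-density relative to `W`. -/
def HasSigmaPosDensityOn [MeasurableSpace X] (E : X → X → Prop) (ρ : X → X → ℝ)
    (B W : Set X) : Prop :=
  ∃ A : ℕ → Set X, (∀ n, MeasurableSet (A n)) ∧ (∀ n, A n ⊆ W) ∧
    (∀ n, ∀ x ∈ A n, ∀ y ∈ W, E x y → y ∈ A n) ∧ W = ⋃ n, A n ∧
    ∀ n, HasPosDensityOn E ρ (B ∩ A n) (A n)

/-- The data of a separated additive cocycle together with a coloring. -/
structure SepData [MeasurableSpace X] (E : X → X → Prop) (l : X → X → ℝ) (c : X → ℕ)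
    (ε : ℝ) : Prop where
  eqv : Equivalence E
  measE : MeasurableSet {p : X × X | E p.1 p.2}
  measl : Measurable (fun p : X × X => l p.1 p.2)
  add : ∀ x y z : X, E x y → E y z → l x z = l x y + l y z
  measc : Measurable c
  pos : 0 < ε
  sep : ∀ x y : X, E x y → c x = c y → |l x y| < ε → x = y

namespace SepData

variable [MeasurableSpace X] {E : X → X → Prop} {l : X → X → ℝ} {c : X → ℕ} {ε : ℝ}

theorem self (h : SepData E l c ε) (x : X) : l x x = 0 := by
  have := h.add x x x (h.eqv.refl x) (h.eqv.refl x)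
  linarith

theorem anti (h : SepData E l c ε) {x y : X} (hxy : E x y) : l x y = - l y x := by
  have := h.add x y x hxy (h.eqv.symm hxy)
  rw [h.self] at this
  linarith

theorem flip (h : SepData E l c ε) : SepData E (fun x y => l y x) c ε where
  eqv := h.eqv
  measE := h.measE
  measl := h.measl.comp measurable_swap
  add x y z hxy hyz := by
    have := h.add z y x (h.eqv.symm hyz) (h.eqv.symm hxy)
    linarith
  measc := h.measc
  pos := h.pos
  sep x y hxy hc hl := (h.sep y x (h.eqv.symm hxy) hc.symm hl).symm

theorem floor_inj (h : SepData E l c ε) {x y z : X} (hy : E x y) (hz : E x z) (hc : c y = c z)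
    (hf : ⌊l y x / ε⌋ = ⌊l z x / ε⌋) : y = z := by
  refine h.sep y z (h.eqv.trans (h.eqv.symm hy) hz) hc ?_
  have h1 := Int.abs_sub_lt_one_of_floor_eq_floor hf
  have h2 := h.add y x z (h.eqv.symm hy) hz
  rw [h.anti hz] at h2
  rw [← sub_div, abs_div, abs_of_pos h.pos, div_lt_one h.pos] at h1
  rw [h2]
  simpa [sub_eq_add_neg] using h1

/-- Quantification over the classes preserves Borelness. -/
theorem measurableSet_proj [StandardBorelSpace X] (h : SepData E l c ε)
    {Y : Type*} [MeasurableSpace Y] [StandardBorelSpace Y]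
    {g : Y → X} (hg : Measurable g) {P : Y → X → Prop}
    (hP : MeasurableSet {q : Y × X | P q.1 q.2}) :
    MeasurableSet {w : Y | ∃ z, E (g w) z ∧ P w z} := by
  have key : {w : Y | ∃ z, E (g w) z ∧ P w z} = ⋃ (n : ℕ) (k : ℤ),
      Prod.fst '' ({q : Y × X | E (g q.1) q.2} ∩ {q : Y × X | c q.2 = n} ∩
        {q : Y × X | ⌊l q.2 (g q.1) / ε⌋ = k} ∩ {q : Y × X | P q.1 q.2}) := by
    ext w
    simp only [mem_ofPred_eq, mem_iUnion, mem_image, mem_inter_iff, Prod.exists]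
    constructor
    · rintro ⟨z, hz, hp⟩
      exact ⟨c z, ⌊l z (g w) / ε⌋, w, z, ⟨⟨⟨hz, rfl⟩, rfl⟩, hp⟩, rfl⟩
    · rintro ⟨n, k, w', z, ⟨⟨⟨hz, -⟩, -⟩, hp⟩, rfl⟩
      exact ⟨z, hz, hp⟩
  rw [key]
  refine MeasurableSet.iUnion fun n => MeasurableSet.iUnion fun k => ?_
  refine MeasurableSet.image_of_measurable_injOn ?_ measurable_fst ?_
  · refine ((MeasurableSet.inter ?_ ?_).inter ?_).inter hP
    · exact h.measE.preimage
        (f := fun q : Y × X => (g q.1, q.2)) ((hg.comp measurable_fst).prodMk measurable_snd)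
    · exact (h.measc.comp measurable_snd) (measurableSet_singleton n)
    · have hm : Measurable (fun q : Y × X => ⌊l q.2 (g q.1) / ε⌋) :=
        Int.measurable_floor.comp ((h.measl.comp
          (measurable_snd.prodMk (hg.comp measurable_fst))).div_const ε)
      exact hm (measurableSet_singleton k)
  · rintro ⟨w, y⟩ ⟨⟨⟨hy, hcy⟩, hfy⟩, -⟩ ⟨w', z⟩ ⟨⟨⟨hz, hcz⟩, hfz⟩, -⟩ (rfl : w = w')
    simp only [mem_ofPred_eq] at hy hcy hfy hz hcz hfz
    rw [h.floor_inj hy hz (hcy.trans hcz.symm) (hfy.trans hfz.symm)]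

/-- There is something of the same color above `x`. -/
def Up (E : X → X → Prop) (l : X → X → ℝ) (c : X → ℕ) (x : X) : Prop :=
  ∃ z, E x z ∧ (c z = c x ∧ 0 < l z x)

/-- `y` is the successor of `x` within its color. -/
def IsSucc (E : X → X → Prop) (l : X → X → ℝ) (c : X → ℕ) (x y : X) : Prop :=
  (E x y ∧ c y = c x ∧ 0 < l y x) ∧ ¬ ∃ z, E x z ∧ (c z = c x ∧ 0 < l z x ∧ l z x < l y x)

theorem exists_succ (h : SepData E l c ε) {x : X} (hx : Up E l c x) :
    ∃ y, IsSucc E l c x y := by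
  classical
  have hx' : ∃ n : ℕ, ∃ z, (E x z ∧ (c z = c x ∧ 0 < l z x)) ∧ ⌊l z x / ε⌋ = n := by
    obtain ⟨z, hz⟩ := hx
    refine ⟨⌊l z x / ε⌋.toNat, z, hz, ?_⟩
    exact (Int.toNat_of_nonneg (Int.floor_nonneg.2 (div_nonneg hz.2.2.le h.pos.le))).symm
  obtain ⟨y, hy, hyn⟩ := Nat.find_spec hx'
  refine ⟨y, hy, ?_⟩
  rintro ⟨z, hz, hcz, hz0, hzy⟩
  have hle : ⌊l z x / ε⌋ ≤ ⌊l y x / ε⌋ :=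
    Int.floor_mono (div_le_div_of_nonneg_right hzy.le h.pos.le)
  have hnn : 0 ≤ ⌊l z x / ε⌋ := Int.floor_nonneg.2 (div_nonneg hz0.le h.pos.le)
  have hmin : Nat.find hx' ≤ ⌊l z x / ε⌋.toNat :=
    Nat.find_min' hx' ⟨z, ⟨hz, hcz, hz0⟩, (Int.toNat_of_nonneg hnn).symm⟩
  have heq : ⌊l z x / ε⌋ = ⌊l y x / ε⌋ := by omega
  have := h.floor_inj hz hy.1 (hcz.trans hy.2.1.symm) heq
  subst this
  exact lt_irrefl _ hzy

theorem succ_unique (h : SepData E l c ε) {x y z : X} (hy : IsSucc E l c x y)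
    (hz : IsSucc E l c x z) : y = z := by
  have h1 : ¬ l y x < l z x := fun hlt => hz.2 ⟨y, hy.1.1, hy.1.2.1, hy.1.2.2, hlt⟩
  have h2 : ¬ l z x < l y x := fun hlt => hy.2 ⟨z, hz.1.1, hz.1.2.1, hz.1.2.2, hlt⟩
  have h3 : l y x = l z x := le_antisymm (not_lt.1 h2) (not_lt.1 h1)
  exact h.floor_inj hy.1.1 hz.1.1 (hy.1.2.1.trans hz.1.2.1.symm) (by rw [h3])

theorem IsSucc.flip (h : SepData E l c ε) {x y : X} (hy : IsSucc E l c x y) :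
    IsSucc E (fun x y => l y x) c y x := by
  obtain ⟨⟨hE, hc, hl⟩, hn⟩ := hy
  refine ⟨⟨h.eqv.symm hE, hc.symm, hl⟩, ?_⟩
  rintro ⟨z, hz, hcz, hz0, hzy⟩
  have h1 := h.add y z x hz (h.eqv.trans (h.eqv.symm hz) (h.eqv.symm hE))
  simp only at hz0 hzy
  exact hn ⟨z, h.eqv.trans hE hz, hcz.trans hc, by linarith, by linarith⟩

theorem measurableSet_up [StandardBorelSpace X] (h : SepData E l c ε) :
    MeasurableSet {x | Up E l c x} := by
  refine h.measurableSet_proj (g := id) measurable_id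
    (P := fun x z => c z = c x ∧ 0 < l z x) ?_
  exact (measurableSet_eq_fun (h.measc.comp measurable_snd) (h.measc.comp measurable_fst)).inter
    (measurableSet_lt measurable_const (h.measl.comp measurable_swap))

theorem measurableSet_isSucc [StandardBorelSpace X] (h : SepData E l c ε) :
    MeasurableSet {p : X × X | IsSucc E l c p.1 p.2} := by
  have hl : Measurable (fun p : X × X => l p.2 p.1) := h.measl.comp measurable_swap
  refine MeasurableSet.inter (h.measE.inter ((measurableSet_eq_fun (h.measc.comp measurable_snd)
    (h.measc.comp measurable_fst)).inter (measurableSet_lt measurable_const hl)))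
    (MeasurableSet.compl ?_)
  refine h.measurableSet_proj (Y := X × X) (g := Prod.fst) measurable_fst
    (P := fun p z => c z = c p.1 ∧ 0 < l z p.1 ∧ l z p.1 < l p.2 p.1) ?_
  have hl1 : Measurable (fun q : (X × X) × X => l q.2 q.1.1) :=
    h.measl.comp (measurable_snd.prodMk (measurable_fst.comp measurable_fst))
  have hl2 : Measurable (fun q : (X × X) × X => l q.1.2 q.1.1) :=
    hl.comp measurable_fst
  exact (measurableSet_eq_fun (h.measc.comp measurable_snd)
    (h.measc.comp (measurable_fst.comp measurable_fst))).inter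
    ((measurableSet_lt measurable_const hl1).inter (measurableSet_lt hl1 hl2))

theorem measurable_of_succ [StandardBorelSpace X] (h : SepData E l c ε) {B : Set X}
    (hB : MeasurableSet B) {f : X → X} (hf : ∀ x ∈ B, IsSucc E l c x (f x))
    (hf' : ∀ x ∉ B, f x = x) : Measurable f := by
  intro A hA
  have key : f ⁻¹' A = (B ∩ {x | ∃ y, E x y ∧ (IsSucc E l c x y ∧ y ∈ A)}) ∪ (Bᶜ ∩ A) := by
    ext x
    by_cases hx : x ∈ B
    · simp only [mem_preimage, mem_union, mem_inter_iff, hx, true_and, mem_ofPred_eq, mem_compl_iff,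
        not_true, false_and, or_false]
      constructor
      · intro hfx
        exact ⟨f x, (hf x hx).1.1, hf x hx, hfx⟩
      · rintro ⟨y, -, hy, hyA⟩
        rwa [h.succ_unique (hf x hx) hy]
    · simp [hx, hf' x hx]
  rw [key]
  refine (hB.inter ?_).union (hB.compl.inter hA)
  exact h.measurableSet_proj (g := id) measurable_id (P := fun x y => IsSucc E l c x y ∧ y ∈ A)
    (h.measurableSet_isSucc.inter (measurable_snd hA))

/-- Two points of the same color with nothing above coincide. -/
theorem top_unique (h : SepData E l c ε) {x y : X} (hE : E x y) (hc : c x = c y)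
    (hx : ¬ Up E l c x) (hy : ¬ Up E l c y) : x = y := by
  have h1 : ¬ 0 < l y x := fun hl => hx ⟨y, hE, hc.symm, hl⟩
  have h2 : ¬ 0 < l x y := fun hl => hy ⟨x, h.eqv.symm hE, hc, hl⟩
  have h3 := h.anti hE
  refine h.sep x y hE hc ?_
  have : l x y = 0 := by linarith
  rw [this, abs_zero]
  exact h.pos

theorem main [StandardBorelSpace X] (h : SepData E l c ε) :
    ∃ B : Set X, MeasurableSet B ∧ EInvariant E B ∧
      (∃ T : Set X, MeasurableSet T ∧ T ⊆ Bᶜ ∧ ∀ x ∈ Bᶜ, ∃! y, y ∈ T ∧ E x y) ∧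
      ∃ T : X ≃ᵐ X, (∀ x ∈ B, T x ∈ B ∧ E x (T x)) ∧ (∀ x ∈ B, T.symm x ∈ B) ∧
        ∀ x ∈ B, l (T.symm x) x < 0 := by
  classical
  let N : Set X := {x | Up E l c x}ᶜ ∪ {x | Up E (fun x y => l y x) c x}ᶜ
  have hN : MeasurableSet N := h.measurableSet_up.compl.union h.flip.measurableSet_up.compl
  let B : Set X := {x | ∃ z, E x z ∧ z ∈ N}ᶜ
  have hB : MeasurableSet B := MeasurableSet.compl
    (h.measurableSet_proj (g := id) measurable_id (P := fun _ z => z ∈ N) (measurable_snd hN))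
  have hinv : EInvariant E B := by
    rintro x y hxy hx ⟨z, hz, hzN⟩
    exact hx ⟨z, h.eqv.trans hxy hz, hzN⟩
  have hup : ∀ x ∈ B, Up E l c x := by
    intro x hx
    by_contra hn
    exact hx ⟨x, h.eqv.refl x, Or.inl hn⟩
  have hdn : ∀ x ∈ B, Up E (fun x y => l y x) c x := by
    intro x hx
    by_contra hn
    exact hx ⟨x, h.eqv.refl x, Or.inr hn⟩
  refine ⟨B, hB, hinv, ?_, ?_⟩
  · let k : X → ℕ := fun x => if Up E l c x then 2 * c x + 1 else 2 * c x
    have hk : Measurable k := Measurable.ite h.measurableSet_up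
      ((h.measc.const_mul 2).add_const 1) (h.measc.const_mul 2)
    have kinj : ∀ x y, x ∈ N → y ∈ N → E x y → k x = k y → x = y := by
      intro x y hx hy hE hkk
      by_cases hux : Up E l c x <;> by_cases huy : Up E l c y <;>
        simp only [k, hux, huy, if_true, if_false] at hkk
      · have hx' : ¬ Up E (fun x y => l y x) c x := hx.resolve_left (fun hn => hn hux)
        have hy' : ¬ Up E (fun x y => l y x) c y := hy.resolve_left (fun hn => hn huy)
        exact h.flip.top_unique hE (by omega) hx' hy'
      · omega
      · omega
      · exact h.top_unique hE (by omega) hux huy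
    refine ⟨N ∩ {x | ∃ z, E x z ∧ (z ∈ N ∧ k z < k x)}ᶜ, ?_, ?_, ?_⟩
    · refine hN.inter (MeasurableSet.compl ?_)
      exact h.measurableSet_proj (g := id) measurable_id (P := fun x z => z ∈ N ∧ k z < k x)
        ((measurable_snd hN).inter
          (measurableSet_lt (hk.comp measurable_snd) (hk.comp measurable_fst)))
    · rintro x ⟨hx, -⟩ hxB
      exact hxB ⟨x, h.eqv.refl x, hx⟩
    · intro x hx
      have hx1 : ∃ z, E x z ∧ z ∈ N := not_not.1 hx
      have hx2 : ∃ n, ∃ z, (E x z ∧ z ∈ N) ∧ k z = n := by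
        obtain ⟨z, hz⟩ := hx1
        exact ⟨_, z, hz, rfl⟩
      obtain ⟨y, ⟨hy, hyN⟩, hyn⟩ := Nat.find_spec hx2
      refine ⟨y, ⟨⟨hyN, ?_⟩, hy⟩, ?_⟩
      · rintro ⟨z, hz, hzN, hlt⟩
        exact Nat.find_min hx2 (hyn ▸ hlt) ⟨z, ⟨h.eqv.trans hy hz, hzN⟩, rfl⟩
      · rintro z ⟨⟨hzN, hzm⟩, hz⟩
        have hzy : E z y := h.eqv.trans (h.eqv.symm hz) hy
        refine kinj z y hzN hyN hzy (le_antisymm ?_ ?_)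
        · exact not_lt.1 fun hlt => hzm ⟨y, hzy, hyN, hlt⟩
        · rw [hyn]
          exact Nat.find_min' hx2 ⟨z, ⟨hz, hzN⟩, rfl⟩
  · have hs : ∀ x, ∃ y, (x ∈ B → IsSucc E l c x y) ∧ (x ∉ B → y = x) := by
      intro x
      by_cases hx : x ∈ B
      · obtain ⟨y, hy⟩ := h.exists_succ (hup x hx)
        exact ⟨y, fun _ => hy, fun hn => absurd hx hn⟩
      · exact ⟨x, fun hn => absurd hn hx, fun _ => rfl⟩
    have hp : ∀ x, ∃ y, (x ∈ B → IsSucc E (fun x y => l y x) c x y) ∧ (x ∉ B → y = x) := by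
      intro x
      by_cases hx : x ∈ B
      · obtain ⟨y, hy⟩ := h.flip.exists_succ (hdn x hx)
        exact ⟨y, fun _ => hy, fun hn => absurd hx hn⟩
      · exact ⟨x, fun hn => absurd hn hx, fun _ => rfl⟩
    choose f hf hf' using hs
    choose g hg hg' using hp
    have hfB : ∀ x ∈ B, f x ∈ B := fun x hx => hinv (hf x hx).1.1 hx
    have hgB : ∀ x ∈ B, g x ∈ B := fun x hx => hinv (hg x hx).1.1 hx
    have hleft : Function.LeftInverse g f := by
      intro x
      by_cases hx : x ∈ B
      · exact h.flip.succ_unique (hg _ (hfB x hx)) (IsSucc.flip h (hf x hx))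
      · rw [hf' x hx, hg' x hx]
    have hright : Function.RightInverse g f := by
      intro x
      by_cases hx : x ∈ B
      · exact h.succ_unique (hf _ (hgB x hx)) (IsSucc.flip h.flip (hg x hx))
      · rw [hg' x hx, hf' x hx]
    refine ⟨MeasurableEquiv.mk ⟨f, g, hleft, hright⟩ (h.measurable_of_succ hB hf hf')
      (h.flip.measurable_of_succ hB hg hg'), ?_, ?_, ?_⟩
    · exact fun x hx => ⟨hfB x hx, (hf x hx).1.1⟩
    · exact hgB
    · intro x hx
      have h1 : 0 < l x (g x) := (hg x hx).1.2.2
      have h2 := h.anti (hg x hx).1.1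
      change l (g x) x < 0
      linarith

end SepData

/-- If `ρ` is smooth, then there is an `E`-invariant Borel set `B` such that `E` restricted to
`Bᶜ` is smooth (admits a Borel transversal) and there is a strictly
`(ρ ↾ (E ↾ B))`-increasing Borel automorphism of `B`. -/
theorem stmt7 [MeasurableSpace X] [StandardBorelSpace X]
    (E : X → X → Prop) (hE : IsCBER E)
    (ρ : X → X → ℝ) (hρ : IsCocycle E ρ) (hsm : Smooth E ρ) :
    ∃ B : Set X, MeasurableSet B ∧ EInvariant E B ∧
      (∃ T : Set X, MeasurableSet T ∧ T ⊆ Bᶜ ∧ ∀ x ∈ Bᶜ, ∃! y, y ∈ T ∧ E x y) ∧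
      ∃ T : X ≃ᵐ X, (∀ x ∈ B, T x ∈ B ∧ E x (T x)) ∧ (∀ x ∈ B, T.symm x ∈ B) ∧
        ∀ x ∈ B, eSize ρ {y | y ∈ B ∧ T y = x} x < 1 := by
  obtain ⟨hEq, hEm, -⟩ := hE
  obtain ⟨hm, hpos, hmul⟩ := hρ
  obtain ⟨U, hU, h1U, -, c, hc, hcol⟩ := hsm
  obtain ⟨δ, hδ, hball⟩ := Metric.isOpen_iff.1 hU 1 h1U
  have hd : SepData E (fun x y => Real.log (ρ x y)) c (Real.log (1 + δ)) :=
    { eqv := hEq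
      measE := hEm
      measl := Real.measurable_log.comp hm
      add := fun x y z hxy hyz => by
        rw [hmul hxy hyz, Real.log_mul (hpos hxy).ne' (hpos hyz).ne']
      measc := hc
      pos := Real.log_pos (by linarith)
      sep := fun x y hxy hcc hl => by
        by_contra hne
        refine hcol (mem_univ x) (mem_univ y) hne hxy (hball ?_) hcc
        have hp := hpos hxy
        rw [abs_lt] at hl
        have h2 : ρ x y < 1 + δ := (Real.log_lt_log_iff hp (by linarith)).1 hl.2
        have h3 : (1 + δ)⁻¹ < ρ x y := by
          refine (Real.log_lt_log_iff (by positivity) hp).1 ?_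
          rw [Real.log_inv]
          exact hl.1
        have h4 : 1 < ρ x y * (1 + δ) := by
          rwa [inv_lt_iff_one_lt_mul₀ (by linarith)] at h3
        rw [Metric.mem_ball, Real.dist_eq, abs_lt]
        constructor
        · nlinarith
        · linarith }
  obtain ⟨B, hB, hinv, hT, T, hT1, hT2, hT3⟩ := hd.main
  refine ⟨B, hB, hinv, hT, T, hT1, hT2, ?_⟩
  intro x hx
  have hset : {y | y ∈ B ∧ T y = x} = {T.symm x} := by
    ext y
    simp only [mem_ofPred_eq, mem_singleton_iff]
    constructor
    · rintro ⟨-, rfl⟩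
      simp
    · rintro rfl
      exact ⟨hT2 x hx, by simp⟩
  have hEx : E (T.symm x) x := by
    have := (hT1 _ (hT2 x hx)).2
    simpa using this
  have hlt : ρ (T.symm x) x < 1 := by
    have := hT3 x hx
    by_contra hn
    exact absurd (Real.log_nonneg (not_lt.1 hn)) (not_le.2 this)
  rw [hset, eSize, tsum_singleton (T.symm x) (fun y => ENNReal.ofReal (ρ y x))]
  rwa [ENNReal.ofReal_lt_one]

end CocycleNadkarni
end

section
/- Let X be a standard Borel space, E a countable Borel equivalence relation on X, and ρ : E → (0,∞) an aperiodic smooth Borel cocycle. Then there is a finite Borel subequivalence relation F of E for which there is a strictly (ρ/F)-increasing Borel injection of X/F into X/F. -/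
open MeasureTheory Set ENNReal

namespace CocycleNadkarni

variable {X : Type*} {Γ : Type*}

/-! ### Greedy blocks -/

/-- State of the greedy block construction: (current weight, previous weight, index). -/
noncomputable def blkSt (a : ℕ → ℝ≥0∞) : ℕ → ℝ≥0∞ × ℝ≥0∞ × ℕ
  | 0 => (a 0, 0, 0)
  | k + 1 => if (blkSt a k).2.1 < (blkSt a k).1 then
      (a (k + 1), (blkSt a k).1, (blkSt a k).2.2 + 1)
    else ((blkSt a k).1 + a (k + 1), (blkSt a k).2.1, (blkSt a k).2.2)

/-- Index of the block containing `k`. -/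
noncomputable def blkIdx (a : ℕ → ℝ≥0∞) (k : ℕ) : ℕ := (blkSt a k).2.2

lemma measurable_blkSt (k : ℕ) : Measurable (fun a : ℕ → ℝ≥0∞ => blkSt a k) := by
  induction k with
  | zero =>
    simp only [blkSt]
    exact (measurable_pi_apply 0).prodMk measurable_const
  | succ k ih =>
    simp only [blkSt]
    have h1 : Measurable (fun a : ℕ → ℝ≥0∞ => (blkSt a k).1) := ih.fst
    have h2 : Measurable (fun a : ℕ → ℝ≥0∞ => (blkSt a k).2.1) := ih.snd.fst
    have h3 : Measurable (fun a : ℕ → ℝ≥0∞ => (blkSt a k).2.2) := ih.snd.snd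
    have h4 : Measurable (fun a : ℕ → ℝ≥0∞ => a (k + 1)) := measurable_pi_apply _
    refine Measurable.ite (measurableSet_lt h2 h1) ?_ ?_
    · exact h4.prodMk (h1.prodMk (h3.add_const 1))
    · exact (h1.add h4).prodMk (h2.prodMk h3)

lemma measurable_blkIdx (k : ℕ) : Measurable (fun a : ℕ → ℝ≥0∞ => blkIdx a k) :=
  (measurable_blkSt k).snd.snd

lemma blkIdx_succ (a : ℕ → ℝ≥0∞) (k : ℕ) :
    blkIdx a (k + 1) =
      if (blkSt a k).2.1 < (blkSt a k).1 then blkIdx a k + 1 else blkIdx a k := by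
  simp only [blkIdx, blkSt]; split_ifs <;> rfl

lemma blkIdx_mono (a : ℕ → ℝ≥0∞) : Monotone (blkIdx a) := by
  refine monotone_nat_of_le_succ fun k => ?_
  rw [blkIdx_succ]; split_ifs <;> omega

/-- partial weight of block `i` -/
noncomputable def blkPart (a : ℕ → ℝ≥0∞) (k i : ℕ) : ℝ≥0∞ :=
  ∑ j ∈ Finset.range (k + 1), if blkIdx a j = i then a j else 0

lemma blkPart_succ (a : ℕ → ℝ≥0∞) (k i : ℕ) :
    blkPart a (k + 1) i = blkPart a k i + if blkIdx a (k + 1) = i then a (k + 1) else 0 := by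
  simp only [blkPart]; rw [Finset.sum_range_succ]

lemma blkPart_future (a : ℕ → ℝ≥0∞) (k i : ℕ) (h : blkIdx a k < i) : blkPart a k i = 0 := by
  refine Finset.sum_eq_zero fun j hj => ?_
  have : blkIdx a j ≤ blkIdx a k := blkIdx_mono a (by simpa [Nat.lt_succ_iff] using hj)
  rw [if_neg (by omega)]

lemma blkSt_inv (a : ℕ → ℝ≥0∞) (k : ℕ) :
    (blkSt a k).1 = blkPart a k (blkIdx a k) ∧
    (∀ i, blkIdx a k = i + 1 → (blkSt a k).2.1 = blkPart a k i) ∧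
    (blkSt a k).2.1 ≤ ∑ j ∈ Finset.range (k + 1), a j := by
  induction k with
  | zero => simp [blkSt, blkPart, blkIdx]
  | succ k ih =>
    obtain ⟨h1, h2, h3⟩ := ih
    have hle : blkPart a k (blkIdx a k) ≤ ∑ j ∈ Finset.range (k + 1), a j := by
      refine Finset.sum_le_sum fun j _ => ?_
      split_ifs <;> simp
    have hs := blkIdx_succ a k
    have hm : ∑ j ∈ Finset.range (k + 1), a j ≤ ∑ j ∈ Finset.range (k + 1 + 1), a j := by
      rw [Finset.sum_range_succ _ (k + 1)]; exact le_self_add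
    by_cases h : (blkSt a k).2.1 < (blkSt a k).1
    · rw [if_pos h] at hs
      have e : blkSt a (k + 1) = (a (k + 1), (blkSt a k).1, (blkSt a k).2.2 + 1) := by
        simp [blkSt, h]
      rw [e]
      refine ⟨?_, ?_, ?_⟩
      · rw [blkPart_succ, if_pos rfl, blkPart_future _ _ _ (by omega), zero_add]
      · intro i hi
        have : i = blkIdx a k := by omega
        subst this
        rw [blkPart_succ, if_neg (by omega), add_zero]; exact h1
      · exact (h1.le.trans hle).trans hm
    · rw [if_neg h] at hs
      have e : blkSt a (k + 1) =
          ((blkSt a k).1 + a (k + 1), (blkSt a k).2.1, (blkSt a k).2.2) := by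
        simp [blkSt, h]
      rw [e]
      refine ⟨?_, ?_, ?_⟩
      · rw [blkPart_succ, if_pos rfl, hs, ← h1]
      · intro i hi
        rw [blkPart_succ, if_neg (by omega), add_zero]; exact h2 i (by omega)
      · exact h3.trans hm

lemma blkIdx_unbounded (a : ℕ → ℝ≥0∞) (ha : ∀ k, a k ≠ ⊤) (hs : ∑' k, a k = ⊤) (n : ℕ) :
    ∃ k, n < blkIdx a k := by
  by_contra! hcon
  -- the index is eventually constant
  obtain ⟨K, hK⟩ : ∃ K, ∀ k, K ≤ k → blkIdx a k = blkIdx a K := by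
    have hfin : (Set.range (blkIdx a)).Finite :=
      (Set.finite_Iic n).subset (by rintro _ ⟨k, rfl⟩; exact hcon k)
    obtain ⟨m, ⟨K, rfl⟩, hm⟩ := hfin.exists_maximal (Set.range_nonempty _)
    exact ⟨K, fun k hk => le_antisymm (hm ⟨k, rfl⟩ (blkIdx_mono a hk)) (blkIdx_mono a hk)⟩
  have hno : ∀ k, K ≤ k → ¬ (blkSt a k).2.1 < (blkSt a k).1 := by
    intro k hk h
    have := blkIdx_succ a k
    rw [if_pos h, hK k hk, hK (k + 1) (by omega)] at this
    omega
  have hprev : ∀ m, (blkSt a (K + m)).2.1 = (blkSt a K).2.1 := by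
    intro m
    induction m with
    | zero => rfl
    | succ m ih =>
      rw [← ih, ← add_assoc]
      simp [blkSt, hno (K + m) (by omega)]
  have hcur : ∀ m, ∑ j ∈ Finset.range m, a (K + j + 1) ≤ (blkSt a (K + m)).1 := by
    intro m
    induction m with
    | zero => simp
    | succ m ih =>
      rw [Finset.sum_range_succ, ← add_assoc]
      simp only [blkSt, hno (K + m) (by omega), if_false]
      gcongr
  have hfin : (blkSt a K).2.1 < ⊤ :=
    (blkSt_inv a K).2.2.trans_lt (ENNReal.sum_lt_top.2 fun j _ => (ha j).lt_top)
  have hb : ∑' k, a (k + (K + 1)) ≤ (blkSt a K).2.1 := by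
    refine ENNReal.summable.tsum_le_of_sum_range_le fun m => ?_
    have := (hcur m).trans (not_lt.1 (hno (K + m) (by omega)))
    rw [hprev] at this
    refine le_trans (le_of_eq ?_) this
    exact Finset.sum_congr rfl fun j _ => by congr 1; omega
  have hsplit := ENNReal.summable.sum_add_tsum_nat_add' (f := a) (k := K + 1)
  rw [hs] at hsplit
  have h1 : ∑ j ∈ Finset.range (K + 1), a j < ⊤ :=
    ENNReal.sum_lt_top.2 fun j _ => (ha j).lt_top
  exact (ENNReal.add_lt_top.2 ⟨h1, hb.trans_lt hfin⟩).ne hsplit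

lemma blk_finite (a : ℕ → ℝ≥0∞) (ha : ∀ k, a k ≠ ⊤) (hs : ∑' k, a k = ⊤) (n : ℕ) :
    {k | blkIdx a k = n}.Finite := by
  obtain ⟨K, hK⟩ := blkIdx_unbounded a ha hs n
  refine (Set.finite_Iio K).subset fun k hk => ?_
  by_contra h
  have := blkIdx_mono a (not_lt.1 h)
  simp only [Set.mem_ofPred_eq] at hk
  omega

lemma blk_lt (a : ℕ → ℝ≥0∞) (ha : ∀ k, a k ≠ ⊤) (hs : ∑' k, a k = ⊤) (i : ℕ) :
    (∑' k, if blkIdx a k = i then a k else 0) <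
      ∑' k, if blkIdx a k = i + 1 then a k else 0 := by
  classical
  have hex := blkIdx_unbounded a ha hs (i + 1)
  obtain ⟨k, hk, hk'⟩ : ∃ k, blkIdx a k ≤ i + 1 ∧ i + 1 < blkIdx a (k + 1) := by
    have h0 : Nat.find hex ≠ 0 := by
      intro h
      have := Nat.find_spec hex
      rw [h] at this
      simp [blkIdx, blkSt] at this
    obtain ⟨m, hm⟩ := Nat.exists_eq_succ_of_ne_zero h0
    refine ⟨m, ?_, ?_⟩
    · exact not_lt.1 (Nat.find_min hex (by omega))
    · have := Nat.find_spec hex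
      rwa [hm] at this
  have hs' := blkIdx_succ a k
  by_cases h : (blkSt a k).2.1 < (blkSt a k).1
  swap
  · rw [if_neg h] at hs'; omega
  rw [if_pos h] at hs'
  have hki : blkIdx a k = i + 1 := by omega
  obtain ⟨h1, h2, -⟩ := blkSt_inv a k
  rw [h1, h2 i hki, hki] at h
  have key : ∀ i' ≤ i + 1, (∑' k, if blkIdx a k = i' then a k else 0) = blkPart a k i' := by
    intro i' hi'
    refine tsum_eq_sum fun j hj => if_neg ?_
    have : k + 1 ≤ j := by simpa using hj
    have := blkIdx_mono a this
    omega
  rw [key i (by omega), key (i + 1) le_rfl]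
  exact h

/-! ### Measurability from countable codes -/

section Codes

variable [MeasurableSpace X] [StandardBorelSpace X]

lemma meas_exists {E : X → X → Prop} (hE : IsCBER E) {κ : X → X → ℕ}
    (hκ : Measurable fun p : X × X => κ p.1 p.2)
    (hinj : ∀ x y z, E x y → E x z → κ x y = κ x z → y = z)
    {Z : Type*} [MeasurableSpace Z] [StandardBorelSpace Z] {g : Z → X} (hg : Measurable g)
    {Q : Z → X → Prop} (hQ : MeasurableSet {p : Z × X | Q p.1 p.2}) :
    MeasurableSet {z | ∃ y, E (g z) y ∧ Q z y} := by
  have hG : Measurable (fun p : Z × X => (g p.1, p.2)) :=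
    (hg.comp measurable_fst).prodMk measurable_snd
  have : {z | ∃ y, E (g z) y ∧ Q z y} = ⋃ n : ℕ, Prod.fst ''
      {p : Z × X | (E (g p.1) p.2 ∧ Q p.1 p.2) ∧ κ (g p.1) p.2 = n} := by
    ext z; simp
  rw [this]
  refine MeasurableSet.iUnion fun n => ?_
  refine MeasurableSet.image_of_measurable_injOn ?_ measurable_fst ?_
  · exact ((hG hE.2.1).inter hQ).inter ((hκ.comp hG) (measurableSet_singleton n))
  · rintro ⟨z, y⟩ ⟨⟨h1, -⟩, h2⟩ ⟨z', y'⟩ ⟨⟨h1', -⟩, h2'⟩ (rfl : z = z')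
    exact Prod.ext rfl (hinj _ _ _ h1 h1' (h2.trans h2'.symm))

lemma meas_graph {E : X → X → Prop} (hE : IsCBER E) {κ : X → X → ℕ}
    (hκ : Measurable fun p : X × X => κ p.1 p.2)
    (hinj : ∀ x y z, E x y → E x z → κ x y = κ x z → y = z)
    {R : X → X → Prop} (hR : MeasurableSet {p : X × X | R p.1 p.2})
    {f : X → X} (h1 : ∀ x, E x (f x)) (h2 : ∀ x, R x (f x))
    (h3 : ∀ x y, E x y → R x y → y = f x) : Measurable f := by
  intro B hB
  have : f ⁻¹' B = {x | ∃ y, E (id x) y ∧ (R x y ∧ y ∈ B)} := by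
    ext x
    constructor
    · intro h; exact ⟨f x, h1 x, h2 x, h⟩
    · rintro ⟨y, hy, hr, hb⟩
      rw [h3 x y hy hr] at hb; exact hb
  rw [this]
  exact meas_exists hE hκ hinj measurable_id (hR.inter (measurable_snd hB))

end Codes

lemma eSize_fiber (ρ : X → X → ℝ) (E : X → X → Prop) (p : X → ℕ) (P : ℕ → Prop)
    [DecidablePred P] (x t : X) :
    eSize ρ {y | E y x ∧ P (p y)} t =
      ∑' k, if P k then eSize ρ {y | E y x ∧ p y = k} t else 0 := by
  classical
  simp only [eSize]
  rw [tsum_subtype {y | E y x ∧ P (p y)} (fun y => ENNReal.ofReal (ρ y t))]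
  have : ∀ k, (if P k then ∑' y : {y | E y x ∧ p y = k}, ENNReal.ofReal (ρ y t) else 0) =
      ∑' y, if P k ∧ E y x ∧ p y = k then ENNReal.ofReal (ρ y t) else 0 := by
    intro k
    rw [tsum_subtype {y | E y x ∧ p y = k} (fun y => ENNReal.ofReal (ρ y t))]
    by_cases hk : P k <;> simp [hk, Set.indicator_apply]
  simp_rw [this]
  rw [ENNReal.tsum_comm]
  refine tsum_congr fun y => ?_
  rw [tsum_eq_single (p y)]
  · simp [Set.indicator_apply, and_comm]
  · intro k hk
    rw [if_neg]; rintro ⟨-, -, h⟩; exact hk h.symm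

/-! ### Codes from smoothness -/

lemma exists_codes [MeasurableSpace X] {E : X → X → Prop} (hE : IsCBER E)
    {ρ : X → X → ℝ} (hρ : IsCocycle E ρ) (hsm : Smooth E ρ) :
    ∃ (c : X → ℕ) (κ : X → X → ℕ), Measurable c ∧ Measurable (fun p : X × X => κ p.1 p.2) ∧
      (∀ x y z, E x y → E x z → κ x y = κ x z → y = z) ∧
      (∀ x y, E x y → ρ x y = 1 → c x = c y → x = y) ∧
      (∀ x, (∃ y, E x y ∧ c y = c x ∧ 1 < ρ y x) → ∃ y, (E x y ∧ c y = c x ∧ 1 < ρ y x) ∧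
        ∀ z, E x z → c z = c x → 1 < ρ z x → ρ y x ≤ ρ z x) := by
  obtain ⟨U, hU, h1, -, c, hc, hcol⟩ := hsm
  obtain ⟨hρm, hpos, hmul⟩ := hρ
  have symm := fun {x y} (h : E x y) => hE.1.symm h
  obtain ⟨δ, hδ, hball⟩ : ∃ δ > 0, ∀ r : ℝ, 0 < r → |Real.log r| < δ → r ∈ U := by
    have : IsOpen (Real.exp ⁻¹' U) := hU.preimage Real.continuous_exp
    obtain ⟨δ, hδ, hb⟩ := Metric.isOpen_iff.1 this 0 (by simpa using h1)
    refine ⟨δ, hδ, fun r hr h => ?_⟩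
    have := hb (show Real.log r ∈ Metric.ball 0 δ by simpa using h)
    simpa [Real.exp_log hr] using this
  let L : X → X → ℤ := fun x y => ⌊Real.log (ρ y x) / δ⌋
  have hLm : Measurable (fun p : X × X => L p.1 p.2) :=
    Int.measurable_floor.comp
      ((Real.measurable_log.comp (hρm.comp measurable_swap)).div_const δ)
  have hLinj : ∀ x y z, E x y → E x z → c y = c z → L x y = L x z → y = z := by
    intro x y z hy hz hcc hL
    by_contra hne
    have hyz : E y z := hE.1.trans (symm hy) hz
    refine hcol (mem_univ y) (mem_univ z) hne hyz (hball _ (hpos hyz) ?_) hcc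
    have hm := hmul hyz (symm hz)
    have hlog : Real.log (ρ y x) = Real.log (ρ y z) + Real.log (ρ z x) := by
      rw [hm, Real.log_mul (hpos hyz).ne' (hpos (symm hz)).ne']
    have := Int.abs_sub_lt_one_of_floor_eq_floor hL
    rw [hlog, ← sub_div, add_sub_cancel_right, abs_div, abs_of_pos hδ, div_lt_one hδ] at this
    exact this
  refine ⟨c, fun x y => Encodable.encode (c y, L x y), hc, ?_, ?_, ?_, ?_⟩
  · exact (Measurable.of_discrete (f := fun q : ℕ × ℤ => Encodable.encode q)).comp
      ((hc.comp measurable_snd).prodMk hLm)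
  · intro x y z hy hz h
    have := Encodable.encode_injective h
    simp only [Prod.mk.injEq] at this
    exact hLinj x y z hy hz this.1 this.2
  · intro x y hxy h hcc
    by_contra hne
    exact hcol (mem_univ x) (mem_univ y) hne hxy (h ▸ h1) hcc
  · intro x hex
    classical
    have hLn : ∀ y, 1 < ρ y x → 0 ≤ L x y := fun y hy =>
      Int.floor_nonneg.2 (div_nonneg (Real.log_nonneg hy.le) hδ.le)
    have hN : ∃ n : ℕ, ∃ y, (E x y ∧ c y = c x ∧ 1 < ρ y x) ∧ L x y = n := by
      obtain ⟨y, hy⟩ := hex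
      exact ⟨(L x y).toNat, y, hy, (Int.toNat_of_nonneg (hLn y hy.2.2)).symm⟩
    obtain ⟨y, hy, hLy⟩ := Nat.find_spec hN
    refine ⟨y, hy, fun z hz hcz hρz => ?_⟩
    have hmin : L x y ≤ L x z := by
      have h2 := Int.toNat_of_nonneg (hLn z hρz)
      have := Nat.find_min' hN ⟨z, ⟨hz, hcz, hρz⟩, h2.symm⟩
      omega
    rcases hmin.eq_or_lt with h | h
    · rw [hLinj x y z hy.1 hz (hy.2.1.trans hcz.symm) h]
    · have h3 : Real.log (ρ y x) / δ < Real.log (ρ z x) / δ := by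
        by_contra! hcon
        exact absurd (Int.floor_mono hcon) (not_le.2 h)
      have h4 := (div_lt_div_iff_of_pos_right hδ).1 h3
      exact ((Real.log_lt_log_iff (hpos (symm hy.1)) (hpos (symm hz))).1 h4).le

/-- The combinatorial form of the theorem, with a map on points instead of on the quotient. -/
lemma core [MeasurableSpace X] [StandardBorelSpace X]
    (E : X → X → Prop) (hE : IsCBER E)
    (ρ : X → X → ℝ) (hρ : IsCocycle E ρ)
    (haper : ∀ x : X, eSize ρ {y | E y x} x = ⊤)
    (hsm : Smooth E ρ) :
    ∃ (F : X → X → Prop) (f : X → X), IsFinSubequiv E F ∧ Measurable f ∧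
      (∀ x y, F x y → F (f x) (f y)) ∧ (∀ x y, F (f x) (f y) → F x y) ∧
      (∀ x, E x (f x)) ∧
      ∀ x, eSize ρ {y | F (f y) x} x < eSize ρ {y | F y x} x := by
  classical
  obtain ⟨c, κ, hc, hκ, hκinj, hc1, hsucc⟩ := exists_codes hE hρ hsm
  obtain ⟨hρm, hpos, hmul⟩ := hρ
  have refl := fun x => hE.1.refl x
  have symm := fun {x y} (h : E x y) => hE.1.symm h
  have trans := fun {x y z} (h : E x y) (h' : E y z) => hE.1.trans h h'
  have hρ1 : ∀ x, ρ x x = 1 := by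
    intro x
    have h1 := hmul (refl x) (refl x)
    have h2 := hpos (refl x)
    nlinarith
  -- measurability helper
  have hfst : Measurable (Prod.fst : X × X → X) := measurable_fst
  have hsnd : Measurable (Prod.snd : X × X → X) := measurable_snd
  have hEx : ∀ Q : X → X → Prop, MeasurableSet {p : X × X | Q p.1 p.2} →
      MeasurableSet {x | ∃ y, E x y ∧ Q x y} := fun Q hQ =>
    meas_exists hE hκ hκinj measurable_id hQ
  have hAll : ∀ Q : X → X → Prop, MeasurableSet {p : X × X | Q p.1 p.2} →
      MeasurableSet {x | ∀ y, E x y → Q x y} := by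
    intro Q hQ
    have : {x | ∀ y, E x y → Q x y} = {x | ∃ y, E x y ∧ ¬ Q x y}ᶜ := by
      ext x; simp
    rw [this]
    exact (hEx (fun x y => ¬ Q x y) hQ.compl).compl
  have hcc : MeasurableSet {p : X × X | c p.2 = c p.1} :=
    measurableSet_eq_fun (hc.comp hsnd) (hc.comp hfst)
  -- maxima of colour classes
  let M : Set X := {x | ∀ y, E x y → c y = c x → ρ y x ≤ 1}
  have hM : MeasurableSet M := by
    refine hAll (fun x y => c y = c x → ρ y x ≤ 1) ?_
    have h2 : MeasurableSet {p : X × X | ρ p.2 p.1 ≤ 1} :=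
      measurableSet_le (hρm.comp measurable_swap) measurable_const
    have : {p : X × X | c p.2 = c p.1 → ρ p.2 p.1 ≤ 1} =
        {p : X × X | c p.2 = c p.1}ᶜ ∪ {p : X × X | ρ p.2 p.1 ≤ 1} := by
      ext p; simp [imp_iff_not_or]
    rw [this]
    exact hcc.compl.union h2
  let T : Set X := {x | x ∈ M ∧ ∀ z, E x z → z ∈ M → c x ≤ c z}
  have hT : MeasurableSet T := by
    refine hM.inter (hAll (fun x z => z ∈ M → c x ≤ c z) ?_)
    have h2 : MeasurableSet {p : X × X | c p.1 ≤ c p.2} :=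
      measurableSet_le (hc.comp hfst) (hc.comp hsnd)
    have : {p : X × X | p.2 ∈ M → c p.1 ≤ c p.2} =
        (Prod.snd ⁻¹' M)ᶜ ∪ {p : X × X | c p.1 ≤ c p.2} := by
      ext p; simp [imp_iff_not_or]
    rw [this]
    exact (hsnd hM).compl.union h2
  have hTuniq : ∀ x y, x ∈ T → y ∈ T → E x y → x = y := by
    intro x y hx hy hxy
    have hcxy : c x = c y := le_antisymm (hx.2 y hxy hy.1) (hy.2 x (symm hxy) hx.1)
    have h1 := hx.1 y hxy hcxy.symm
    have h2 := hy.1 x (symm hxy) hcxy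
    have h3 := hmul hxy (symm hxy)
    rw [hρ1] at h3
    have h4 := hpos hxy
    have h5 := hpos (symm hxy)
    exact hc1 x y hxy (by nlinarith) hcxy
  let S : Set X := {x | ∃ y, E x y ∧ y ∈ T}
  have hS : MeasurableSet S := hEx (fun _ y => y ∈ T) (hsnd hT)
  have hSinv : ∀ {x y}, E x y → x ∈ S → y ∈ S := by
    rintro x y hxy ⟨t, ht, htT⟩
    exact ⟨t, trans (symm hxy) ht, htT⟩
  have hMS : ∀ x, x ∈ M → x ∈ S := by
    intro x hx
    have hN : ∃ n, ∃ y, E x y ∧ y ∈ M ∧ c y = n := ⟨c x, x, refl x, hx, rfl⟩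
    obtain ⟨y, hy, hyM, hcy⟩ := Nat.find_spec hN
    refine ⟨y, hy, hyM, fun z hz hzM => ?_⟩
    rw [hcy]
    exact Nat.find_min' hN ⟨z, trans hy hz, hzM, rfl⟩
  -- the selector
  have hsex : ∀ x, ∃ y, E x y ∧ (y ∈ T ∨ (x ∉ S ∧ y = x)) := by
    intro x
    by_cases hx : x ∈ S
    · obtain ⟨t, ht, htT⟩ := hx
      exact ⟨t, ht, Or.inl htT⟩
    · exact ⟨x, refl x, Or.inr ⟨hx, rfl⟩⟩
  choose s hsE hsT using hsex
  have hsS : ∀ {x}, x ∈ S → s x ∈ T := fun {x} hx => (hsT x).resolve_right fun h => h.1 hx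
  have hdiag : MeasurableSet {p : X × X | p.2 = p.1} := measurableSet_eq_fun hsnd hfst
  have hsm' : Measurable s := by
    refine meas_graph hE hκ hκinj (R := fun x y => y ∈ T ∨ (x ∉ S ∧ y = x)) ?_ hsE hsT ?_
    · exact (hsnd hT).union ((hfst hS).compl.inter hdiag)
    · intro x y hy hr
      rcases hr with h | ⟨h, rfl⟩
      · have hx : x ∈ S := ⟨y, hy, h⟩
        exact hTuniq _ _ h (hsS hx) (trans (symm hy) (hsE x))
      · rcases hsT y with h' | h'
        · exact absurd ⟨_, hsE y, h'⟩ h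
        · exact h'.2.symm
  have hsc : ∀ {x y}, x ∈ S → E x y → s x = s y := fun {x y} hx hxy =>
    hTuniq _ _ (hsS hx) (hsS (hSinv hxy hx)) (trans (symm (hsE x)) (trans hxy (hsE y)))
  -- enumeration of the classes in `S`
  let p : X → ℕ := fun x => κ (s x) x
  have hp : Measurable p := hκ.comp (hsm'.prodMk measurable_id)
  have hpinj : ∀ {x y}, x ∈ S → E x y → p x = p y → x = y := by
    intro x y hx hxy h
    refine hκinj (s x) x y (symm (hsE x)) (trans (symm (hsE x)) hxy) ?_
    have : p y = κ (s x) y := by rw [hsc hx hxy]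
    rw [← this]; exact h
  let a : X → ℕ → ℝ≥0∞ := fun x k => if x ∈ S then eSize ρ {y | E y x ∧ p y = k} (s x) else 0
  have haval : ∀ {x y} k, x ∈ S → E x y → p y = k → a x k = ENNReal.ofReal (ρ y (s x)) := by
    intro x y k hx hxy hk
    have : {z | E z x ∧ p z = k} = {y} := by
      ext z
      simp only [mem_ofPred_eq, mem_singleton_iff]
      constructor
      · rintro ⟨hz, hzk⟩
        exact hpinj (hSinv (symm hz) hx) (trans hz hxy) (hzk.trans hk.symm)
      · rintro rfl; exact ⟨symm hxy, hk⟩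
    have h1 : a x k = eSize ρ {z | E z x ∧ p z = k} (s x) := if_pos hx
    rw [h1, this, eSize]
    rw [tsum_singleton y (fun z => ENNReal.ofReal (ρ z (s x)))]
  have haval0 : ∀ {x} k, ¬ (x ∈ S ∧ ∃ y, E x y ∧ p y = k) → a x k = 0 := by
    intro x k h
    by_cases hx : x ∈ S
    · have : {z | E z x ∧ p z = k} = ∅ := by
        ext z
        simp only [mem_ofPred_eq, mem_empty_iff_false, iff_false]
        rintro ⟨hz, hzk⟩
        exact h ⟨hx, z, symm hz, hzk⟩
      simp [a, this, eSize]
    · simp [a, hx]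
  have hatop : ∀ x k, a x k ≠ ⊤ := by
    intro x k
    by_cases h : x ∈ S ∧ ∃ y, E x y ∧ p y = k
    · obtain ⟨hx, y, hy, hk⟩ := h
      rw [haval k hx hy hk]; exact ENNReal.ofReal_ne_top
    · rw [haval0 k h]; exact ENNReal.zero_ne_top
  have ham : Measurable a := by
    refine measurable_pi_iff.2 fun k => ?_
    intro B hB
    have hD : MeasurableSet {x | x ∈ S ∧ ∃ y, E x y ∧ p y = k} :=
      hS.inter (hEx (fun _ y => p y = k) ((hp.comp hsnd) (measurableSet_singleton k)))
    have hD' : MeasurableSet {x | x ∈ S ∧ ∃ y, E x y ∧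
        (p y = k ∧ ENNReal.ofReal (ρ y (s x)) ∈ B)} := by
      refine hS.inter (hEx (fun x y => p y = k ∧ ENNReal.ofReal (ρ y (s x)) ∈ B) ?_)
      refine MeasurableSet.inter ((hp.comp hsnd) (measurableSet_singleton k)) ?_
      exact (ENNReal.measurable_ofReal.comp
        (hρm.comp (hsnd.prodMk (hsm'.comp hfst)))) hB
    have : (fun x => a x k) ⁻¹' B = {x | x ∈ S ∧ ∃ y, E x y ∧
        (p y = k ∧ ENNReal.ofReal (ρ y (s x)) ∈ B)} ∪
        ({x | x ∈ S ∧ ∃ y, E x y ∧ p y = k}ᶜ ∩ {_x | (0 : ℝ≥0∞) ∈ B}) := by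
      ext x
      simp only [mem_preimage, mem_union, mem_inter_iff, mem_compl_iff, mem_ofPred_eq]
      by_cases h : x ∈ S ∧ ∃ y, E x y ∧ p y = k
      · obtain ⟨hx, y, hy, hk⟩ := h
        rw [haval k hx hy hk]
        constructor
        · intro hB'; exact Or.inl ⟨hx, y, hy, hk, hB'⟩
        · rintro (⟨-, z, hz, hzk, hzB⟩ | ⟨hn, -⟩)
          · have : z = y := hpinj (hSinv hz hx) (trans (symm hz) hy) (hzk.trans hk.symm)
            rwa [← this]
          · exact absurd ⟨hx, y, hy, hk⟩ hn
      · rw [haval0 k h]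
        constructor
        · intro hB'; exact Or.inr ⟨h, hB'⟩
        · rintro (⟨hx, z, hz, hzk, -⟩ | ⟨-, hB'⟩)
          · exact absurd ⟨hx, z, hz, hzk⟩ h
          · exact hB'
    rw [this]
    exact hD'.union (hD.compl.inter (MeasurableSet.const _))
  have hac : ∀ {x y}, x ∈ S → E x y → a x = a y := by
    intro x y hx hxy
    funext k
    have : {z | E z x ∧ p z = k} = {z | E z y ∧ p z = k} := by
      ext z
      exact and_congr_left fun _ => ⟨fun h => trans h hxy, fun h => trans h (symm hxy)⟩
    simp only [a, if_pos hx, if_pos (hSinv hxy hx), this, hsc hx hxy]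
  -- change of base point
  have hbase : ∀ (Y : Set X) x t, (∀ y ∈ Y, E y x) → E x t →
      eSize ρ Y x = eSize ρ Y t * ENNReal.ofReal (ρ t x) := by
    intro Y x t hY ht
    simp only [eSize]
    rw [← ENNReal.tsum_mul_right]
    refine tsum_congr fun y => ?_
    rw [hmul (trans (hY y y.2) ht) (symm ht), ENNReal.ofReal_mul
      (hpos (trans (hY y y.2) ht)).le]
  have hasum : ∀ {x}, x ∈ S → ∑' k, a x k = ⊤ := by
    intro x hx
    have h1 := eSize_fiber ρ E p (fun _ => True) x (s x)
    simp only [and_true, if_true] at h1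
    have h2 := hbase {y | E y x} x (s x) (fun y hy => hy) (hsE x)
    rw [haper] at h2
    have h3 : ∑' k, a x k = eSize ρ {y | E y x} (s x) := by
      rw [h1]; simp only [a, if_pos hx]
    rw [h3]
    by_contra hne
    exact ENNReal.mul_ne_top hne ENNReal.ofReal_ne_top h2.symm
  -- block index
  let b : X → ℕ := fun x => blkIdx (a x) (p x)
  have hb : Measurable b := by
    have h1 : Measurable (fun q : (ℕ → ℝ≥0∞) × ℕ => blkIdx q.1 q.2) :=
      measurable_from_prod_countable_left fun k => measurable_blkIdx k
    exact h1.comp (ham.prodMk hp)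
  have hbx : ∀ {x y}, x ∈ S → E y x → b y = blkIdx (a x) (p y) := by
    intro x y hx hy
    simp only [b, hac hx (symm hy)]
  have hbsize : ∀ {x} i, x ∈ S → eSize ρ {y | E y x ∧ b y = i} (s x) =
      ∑' k, if blkIdx (a x) k = i then a x k else 0 := by
    intro x i hx
    have h1 := eSize_fiber ρ E p (fun k => blkIdx (a x) k = i) x (s x)
    have h2 : {y | E y x ∧ b y = i} = {y | E y x ∧ blkIdx (a x) (p y) = i} := by
      ext y
      exact and_congr_right fun hy => by rw [hbx hx hy]
    rw [h2, h1]
    simp only [a, if_pos hx]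
  have hblt : ∀ {x} i, x ∈ S →
      eSize ρ {y | E y x ∧ b y = i} x < eSize ρ {y | E y x ∧ b y = i + 1} x := by
    intro x i hx
    rw [hbase _ x (s x) (fun y hy => hy.1) (hsE x),
      hbase {y | E y x ∧ b y = i + 1} x (s x) (fun y hy => hy.1) (hsE x), hbsize i hx,
      hbsize (i + 1) hx]
    refine ENNReal.mul_lt_mul_left ?_ ENNReal.ofReal_ne_top (blk_lt (a x) (hatop x) (hasum hx) i)
    exact (ENNReal.ofReal_pos.2 (hpos (symm (hsE x)))).ne'
  have hbne : ∀ {x} i, x ∈ S → ∃ y, E x y ∧ b y = i + 1 := by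
    intro x i hx
    by_contra! hcon
    have h := hblt i hx
    have : {y | E y x ∧ b y = i + 1} = ∅ := by
      ext y
      simp only [mem_ofPred_eq, mem_empty_iff_false, iff_false]
      rintro ⟨hy, hyb⟩
      exact hcon y (symm hy) hyb
    rw [this] at h
    simp [eSize] at h
  have hbfin : ∀ {x} i, x ∈ S → {y | E x y ∧ b y = i}.Finite := by
    intro x i hx
    refine Set.Finite.of_finite_image (f := p)
      ((blk_finite (a x) (hatop x) (hasum hx) i).subset ?_) ?_
    · rintro _ ⟨y, ⟨hy, hyb⟩, rfl⟩
      rw [hbx hx (symm hy)] at hyb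
      exact hyb
    · intro y hy z hz hyz
      exact hpinj (hSinv hy.1 hx) (trans (symm hy.1) hz.1) hyz
  -- least elements of blocks
  let N : Set X := {y | ∀ z, E y z → b z = b y → p y ≤ p z}
  have hN : MeasurableSet N := by
    refine hAll (fun y z => b z = b y → p y ≤ p z) ?_
    have h2 : MeasurableSet {q : X × X | p q.1 ≤ p q.2} :=
      measurableSet_le (hp.comp hfst) (hp.comp hsnd)
    have h3 : MeasurableSet {q : X × X | b q.2 = b q.1} :=
      measurableSet_eq_fun (hb.comp hsnd) (hb.comp hfst)
    have : {q : X × X | b q.2 = b q.1 → p q.1 ≤ p q.2} =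
        {q : X × X | b q.2 = b q.1}ᶜ ∪ {q : X × X | p q.1 ≤ p q.2} := by
      ext q; simp [imp_iff_not_or]
    rw [this]
    exact h3.compl.union h2
  -- the map
  let R1 : X → X → Prop := fun x y => b y = b x + 1 ∧ y ∈ N
  let R2 : X → X → Prop := fun x y => (c y = c x ∧ 1 < ρ y x) ∧
    ∀ z, E x z → c z = c x → 1 < ρ z x → ρ y x ≤ ρ z x
  let R : X → X → Prop := fun x y => (x ∈ S ∧ R1 x y) ∨ (x ∉ S ∧ R2 x y)
  have hfex : ∀ x, ∃ y, E x y ∧ R x y := by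
    intro x
    by_cases hx : x ∈ S
    · have hne : ∃ n, ∃ y, (E x y ∧ b y = b x + 1) ∧ p y = n := by
        obtain ⟨y, hy⟩ := hbne (b x) hx
        exact ⟨p y, y, hy, rfl⟩
      obtain ⟨y, hy, hpy⟩ := Nat.find_spec hne
      refine ⟨y, hy.1, Or.inl ⟨hx, hy.2, fun z hz hzb => ?_⟩⟩
      rw [hpy]
      exact Nat.find_min' hne ⟨z, ⟨trans hy.1 hz, hzb.trans hy.2⟩, rfl⟩
    · have hxM : ¬ x ∈ M := fun h => hx (hMS x h)
      have : ∃ y, E x y ∧ c y = c x ∧ 1 < ρ y x := by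
        by_contra! hcon
        exact hxM hcon
      obtain ⟨y, hy, hmin⟩ := hsucc x this
      exact ⟨y, hy.1, Or.inr ⟨hx, hy.2, hmin⟩⟩
  choose f hfE hfR using hfex
  have hf1 : ∀ {x}, x ∈ S → R1 x (f x) := fun {x} hx => by
    rcases hfR x with h | h
    · exact h.2
    · exact absurd hx h.1
  have hf2 : ∀ {x}, x ∉ S → R2 x (f x) := fun {x} hx => by
    rcases hfR x with h | h
    · exact absurd h.1 hx
    · exact h.2
  have heq : ∀ {x y z}, E x y → E x z → c y = c z → ρ y x = ρ z x → y = z := by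
    intro x y z hy hz hcyz hr
    have hyz := trans (symm hy) hz
    refine hc1 y z hyz ?_ hcyz
    have h1 := hmul hyz (symm hz)
    have h2 := hpos (symm hz)
    rw [hr] at h1
    exact (mul_eq_right₀ h2.ne').1 h1.symm
  have hfm : Measurable f := by
    refine meas_graph hE hκ hκinj (R := R) ?_ hfE hfR ?_
    · have hR1 : MeasurableSet {q : X × X | R1 q.1 q.2} :=
        (measurableSet_eq_fun (hb.comp hsnd) ((hb.comp hfst).add_const 1)).inter (hsnd hN)
      have hgt : MeasurableSet {q : X × X | 1 < ρ q.2 q.1} :=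
        measurableSet_lt measurable_const (hρm.comp measurable_swap)
      have hR2 : MeasurableSet {q : X × X | R2 q.1 q.2} := by
        refine MeasurableSet.inter (hcc.inter hgt) ?_
        have h3 : MeasurableSet {q : X × X | ∃ z, E q.1 z ∧
            ((c z = c q.1 ∧ 1 < ρ z q.1) ∧ ρ z q.1 < ρ q.2 q.1)} := by
          have hfz : Measurable (fun w : (X × X) × X => w.1.1) := hfst.comp measurable_fst
          have hsz : Measurable (fun w : (X × X) × X => w.1.2) := hsnd.comp measurable_fst
          have hz : Measurable (fun w : (X × X) × X => w.2) := measurable_snd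
          refine meas_exists hE hκ hκinj (g := fun q : X × X => q.1) hfst
            (Q := fun q z => (c z = c q.1 ∧ 1 < ρ z q.1) ∧ ρ z q.1 < ρ q.2 q.1) ?_
          refine MeasurableSet.inter (MeasurableSet.inter ?_ ?_) ?_
          · exact measurableSet_eq_fun (hc.comp hz) (hc.comp hfz)
          · exact measurableSet_lt measurable_const (hρm.comp (hz.prodMk hfz))
          · exact measurableSet_lt (hρm.comp (hz.prodMk hfz)) (hρm.comp (hsz.prodMk hfz))
        have h4 : {q : X × X | ∀ z, E q.1 z → c z = c q.1 → 1 < ρ z q.1 →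
            ρ q.2 q.1 ≤ ρ z q.1} = {q : X × X | ∃ z, E q.1 z ∧
            ((c z = c q.1 ∧ 1 < ρ z q.1) ∧ ρ z q.1 < ρ q.2 q.1)}ᶜ := by
          ext q
          simp only [mem_ofPred_eq, mem_compl_iff, not_exists, not_and, not_lt, and_imp]
        have h5 := h3.compl
        rw [← h4] at h5
        exact h5
      exact ((hfst hS).inter hR1).union ((hfst hS).compl.inter hR2)
    · intro x y hy hr
      have hyf : E y (f x) := trans (symm hy) (hfE x)
      rcases hr with ⟨hx, h1, h2⟩ | ⟨hx, h1, h2⟩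
      · obtain ⟨h3, h4⟩ := hf1 hx
        exact hpinj (hSinv hy hx) hyf (le_antisymm (h2 _ hyf (h3.trans h1.symm))
          (h4 _ (symm hyf) (h1.trans h3.symm)))
      · obtain ⟨h3, h4⟩ := hf2 hx
        exact heq hy (hfE x) (h1.1.trans h3.1.symm)
          (le_antisymm (h2 _ (hfE x) h3.1 h3.2) (h4 _ hy h1.1 h1.2))
  -- the equivalence relation
  let F : X → X → Prop := fun x y => x = y ∨ (E x y ∧ x ∈ S ∧ b x = b y)
  have hFE : ∀ {x y}, F x y → E x y := by
    rintro x y (rfl | h)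
    · exact refl x
    · exact h.1
  have hFS : ∀ {x y}, y ∈ S → (F x y ↔ E x y ∧ b x = b y) := by
    intro x y hy
    constructor
    · rintro (rfl | h)
      · exact ⟨refl x, rfl⟩
      · exact ⟨h.1, h.2.2⟩
    · rintro ⟨h1, h2⟩
      exact Or.inr ⟨h1, hSinv (symm h1) hy, h2⟩
  have hFnS : ∀ {x y}, y ∉ S → (F x y ↔ x = y) := by
    intro x y hy
    constructor
    · rintro (h | h)
      · exact h
      · exact absurd (hSinv h.1 h.2.1) hy
    · exact Or.inl
  have hfS : ∀ {x}, f x ∈ S ↔ x ∈ S := fun {x} =>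
    ⟨fun h => hSinv (symm (hfE x)) h, fun h => hSinv (hfE x) h⟩
  have hfinj : ∀ {x y}, x ∉ S → f x = f y → ¬ 1 < ρ y x := by
    intro x y hx hxy hlt
    have hxy' : E x y := trans (hfE x) (hxy ▸ symm (hfE y))
    have hy : y ∉ S := fun h => hx (hSinv (symm hxy') h)
    obtain ⟨h1, h2⟩ := hf2 hx
    obtain ⟨h3, h4⟩ := hf2 hy
    have hcyx : c y = c x := by rw [← h3.1, ← hxy, h1.1]
    have h5 := h2 y hxy' hcyx hlt
    have h6 := hmul (symm (hfE y)) (symm hxy')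
    rw [← hxy] at h6 h3
    have h7 := hpos (symm hxy')
    nlinarith [h3.2]
  have hfinj' : ∀ {x y}, x ∉ S → f x = f y → x = y := by
    intro x y hx hxy
    have hxy' : E x y := trans (hfE x) (hxy ▸ symm (hfE y))
    have hy : y ∉ S := fun h => hx (hSinv (symm hxy') h)
    have hcyx : c x = c y := by rw [← (hf2 hx).1.1, hxy, (hf2 hy).1.1]
    refine hc1 x y hxy' ?_ hcyx
    have h1 := not_lt.1 (hfinj hx hxy)
    have h2 := not_lt.1 (hfinj hy hxy.symm)
    have h3 := hmul hxy' (symm hxy')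
    rw [hρ1] at h3
    have h4 := hpos hxy'
    have h5 := hpos (symm hxy')
    nlinarith
  refine ⟨F, f, ⟨⟨fun x => Or.inl rfl, ?_, ?_⟩, ?_, fun x y => hFE, ?_⟩, hfm, ?_, ?_, hfE, ?_⟩
  · rintro x y (rfl | ⟨h1, h2, h3⟩)
    · exact Or.inl rfl
    · exact Or.inr ⟨symm h1, hSinv h1 h2, h3.symm⟩
  · rintro x y z (rfl | ⟨h1, h2, h3⟩) h
    · exact h
    · rcases h with rfl | ⟨h4, h5, h6⟩
      · exact Or.inr ⟨h1, h2, h3⟩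
      · exact Or.inr ⟨trans h1 h4, h2, h3.trans h6⟩
  · exact (measurableSet_eq_fun hfst hsnd).union (hE.2.1.inter ((hfst hS).inter
      (measurableSet_eq_fun (hb.comp hfst) (hb.comp hsnd))))
  · intro x
    by_cases hx : x ∈ S
    · refine (hbfin (b x) hx).subset ?_
      rintro y (rfl | h)
      · exact ⟨refl _, rfl⟩
      · exact ⟨h.1, h.2.2.symm⟩
    · refine (Set.finite_singleton x).subset ?_
      rintro y (h | h)
      · exact h.symm
      · exact absurd h.2.1 hx
  · rintro x y (rfl | ⟨h1, h2, h3⟩)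
    · exact Or.inl rfl
    · refine Or.inr ⟨trans (symm (hfE x)) (trans h1 (hfE y)), hfS.2 h2, ?_⟩
      rw [(hf1 h2).1, (hf1 (hSinv h1 h2)).1, h3]
  · intro x y h
    have hxy : E x y := trans (hfE x) (trans (hFE h) (symm (hfE y)))
    by_cases hy : y ∈ S
    · have hx := hSinv (symm hxy) hy
      have h' := ((hFS (hfS.2 hy)).1 h).2
      rw [(hf1 hy).1, (hf1 hx).1] at h'
      exact (hFS hy).2 ⟨hxy, by omega⟩
    · have hx : x ∉ S := fun h => hy (hSinv hxy h)
      exact Or.inl (hfinj' hx ((hFnS (fun h => hy (hfS.1 h))).1 h))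
  · intro x
    have hself : 0 < eSize ρ {y | F y x} x := by
      have h1 : ENNReal.ofReal (ρ x x) ≤ eSize ρ {y | F y x} x :=
        ENNReal.le_tsum (f := fun y : {y | F y x} => ENNReal.ofReal (ρ y x)) ⟨x, Or.inl rfl⟩
      rw [hρ1] at h1
      exact lt_of_lt_of_le (by simp) h1
    by_cases hx : x ∈ S
    · have e1 : {y | F y x} = {y | E y x ∧ b y = b x} := by
        ext y; exact hFS hx
      have e2 : {y | F (f y) x} = {y | E y x ∧ b y + 1 = b x} := by
        ext y
        simp only [mem_ofPred_eq]
        rw [hFS hx]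
        constructor
        · rintro ⟨h1, h2⟩
          have hyx := trans (hfE y) h1
          rw [(hf1 (hSinv (symm hyx) hx)).1] at h2
          exact ⟨hyx, h2⟩
        · rintro ⟨h1, h2⟩
          refine ⟨trans (symm (hfE y)) h1, ?_⟩
          rw [(hf1 (hSinv (symm h1) hx)).1, h2]
      rcases Nat.eq_zero_or_pos (b x) with h0 | h0
      · have : {y | F (f y) x} = ∅ := by
          rw [e2]; ext y; simp [h0]
        rw [this]
        simpa [eSize] using hself
      · obtain ⟨i, hi⟩ := Nat.exists_eq_succ_of_ne_zero h0.ne'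
        rw [e1, e2, hi]
        simpa using hblt i hx
    · by_cases hex : ∃ y, f y = x
      · obtain ⟨y, rfl⟩ := hex
        have hy : y ∉ S := fun h => hx (hfS.2 h)
        have e2 : {z | F (f z) (f y)} = {y} := by
          ext z
          simp only [mem_ofPred_eq, mem_singleton_iff]
          rw [hFnS hx]
          exact ⟨fun h => (hfinj' hy h.symm).symm, fun h => by rw [h]⟩
        have e1 : {z | F z (f y)} = {f y} := by
          ext z; exact hFnS hx
        rw [e1, e2]
        simp only [eSize]
        rw [tsum_singleton y (fun z => ENNReal.ofReal (ρ z (f y))),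
          tsum_singleton (f y) (fun z => ENNReal.ofReal (ρ z (f y))), hρ1]
        refine (ENNReal.ofReal_lt_ofReal_iff one_pos).2 ?_
        have h1 := (hf2 hy).1.2
        have h2 := hmul (hfE y) (symm (hfE y))
        rw [hρ1] at h2
        have h3 := hpos (hfE y)
        nlinarith
      · have : {y | F (f y) x} = ∅ := by
          ext y
          simp only [mem_ofPred_eq, mem_empty_iff_false, iff_false]
          rw [hFnS hx]
          exact fun h => hex ⟨y, h⟩
        rw [this]
        simpa [eSize] using hself

/-- If `ρ` is aperiodic and smooth, then there is a finite Borel subequivalence relation `F`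
of `E` admitting a strictly `(ρ / F)`-increasing Borel injection of `X / F` into itself. -/
theorem stmt8 [MeasurableSpace X] [StandardBorelSpace X]
    (E : X → X → Prop) (hE : IsCBER E)
    (ρ : X → X → ℝ) (hρ : IsCocycle E ρ)
    (haper : ∀ x : X, eSize ρ {y | E y x} x = ⊤)
    (hsm : Smooth E ρ) :
    ∃ (F : X → X → Prop) (hF : Equivalence F), IsFinSubequiv E F ∧
      ∃ φ : Quotient (Setoid.mk F hF) → Quotient (Setoid.mk F hF),
        Measurable φ ∧ Function.Injective φ ∧
        (∀ x y : X, φ (Quotient.mk (Setoid.mk F hF) x) = Quotient.mk (Setoid.mk F hF) y →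
          E x y) ∧
        ∀ x : X,
          relSize ρ {y | φ (Quotient.mk (Setoid.mk F hF) y) = Quotient.mk (Setoid.mk F hF) x}
            {y | F y x} x < 1 := by
  obtain ⟨F, f, hF, hfm, hf1, hf2, hfE, hlt⟩ := core E hE ρ hρ haper hsm
  refine ⟨F, hF.1, hF, ?_⟩
  let st : Setoid X := Setoid.mk F hF.1
  have hmk : ∀ x y : X, Quotient.mk st x = Quotient.mk st y ↔ F x y := fun x y =>
    ⟨fun h => Quotient.exact h, fun h => Quotient.sound h⟩
  let φ : Quotient st → Quotient st := Quotient.map f hf1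
  have hφ : ∀ x, φ (Quotient.mk st x) = Quotient.mk st (f x) := fun x => rfl
  refine ⟨φ, ?_, ?_, ?_, ?_⟩
  · refine measurable_from_quotient.2 ?_
    exact measurable_quotient_mk'.comp hfm
  · intro u v
    induction u using Quotient.inductionOn with | _ x => ?_
    induction v using Quotient.inductionOn with | _ y => ?_
    intro h
    exact (hmk x y).2 (hf2 x y ((hmk _ _).1 h))
  · intro x y h
    exact hE.1.trans (hfE x) (hF.2.2.1 ((hmk _ _).1 h))
  · intro x
    have e : {y | φ (Quotient.mk st y) = Quotient.mk st x} = {y | F (f y) x} := by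
      ext y; exact hmk (f y) x
    have h : relSize ρ {y | φ (Quotient.mk st y) = Quotient.mk st x} {y | F y x} x < 1 := by
      rw [e]
      exact ENNReal.div_lt_of_lt_mul (by rw [one_mul]; exact hlt x)
    exact h

end CocycleNadkarni
end

section
/- Let X be a standard Borel space, E a countable Borel equivalence relation on X, ρ : E → (0,∞) a Borel cocycle, and μ a ρ-invariant Borel measure. Then μ(φ⁻¹(B)) = ∫_B |φ⁻¹(x)|^x_ρ dμ(x) for all Borel sets B ⊆ X and all Borel functions φ : X → X whose graphs are contained in E. -/
open MeasureTheory Set ENNReal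

namespace CocycleNadkarni

variable {X : Type*} {Γ : Type*}

section LusinNovikov

theorem analytic_inter {X : Type*} [TopologicalSpace X] [T2Space X] {s t : Set X}
    (hs : AnalyticSet s) (ht : AnalyticSet t) : AnalyticSet (s ∩ t) := by
  rw [inter_eq_iInter]
  refine AnalyticSet.iInter ?_
  rintro (_ | _)
  · exact ht
  · exact hs

variable {X Z : Type*} [TopologicalSpace X] [PolishSpace X] [MeasurableSpace X] [BorelSpace X]
  [TopologicalSpace Z] [T2Space Z]

theorem analytic_nbhd {f : X → Z} (hf : Continuous f) {S : Set X} (hS : AnalyticSet S) :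
    AnalyticSet {x | ∃ y ∈ S, x ≠ y ∧ f x = f y} := by
  have h1 : AnalyticSet ((Prod.snd : X × X → X) ⁻¹' S) := hS.preimage continuous_snd
  have h2 : AnalyticSet {p : X × X | p.1 ≠ p.2} :=
    (isOpen_ne_fun continuous_fst continuous_snd).measurableSet.analyticSet
  have h3 : AnalyticSet {p : X × X | f p.1 = f p.2} :=
    (isClosed_eq (hf.comp continuous_fst) (hf.comp continuous_snd)).analyticSet
  have := (analytic_inter h1 (analytic_inter h2 h3)).image_of_continuous continuous_fst
  convert this using 1
  ext x
  simp only [mem_ofPred_eq, mem_image, mem_inter_iff, mem_preimage, Prod.exists]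
  constructor
  · rintro ⟨y, h⟩; exact ⟨x, y, h, rfl⟩
  · rintro ⟨x', y, h, rfl⟩; exact ⟨y, h⟩

theorem exists_hull {f : X → Z} (hf : Continuous f) {A : Set X} (hA : AnalyticSet A)
    (hinj : InjOn f A) : ∃ B, MeasurableSet B ∧ A ⊆ B ∧ InjOn f B := by
  obtain ⟨B0, hAB0, hd0, hB0⟩ := hA.measurablySeparable (analytic_nbhd hf hA) (by
    rw [Set.disjoint_left]
    rintro x hx ⟨y, hy, hne, he⟩
    exact hne (hinj hx hy he))
  obtain ⟨B1, hAB1, hd1, hB1⟩ := hA.measurablySeparable (analytic_nbhd hf hB0.analyticSet) (by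
    rw [Set.disjoint_left]
    rintro x hx ⟨y, hy, hne, he⟩
    exact Set.disjoint_left.1 hd0 ⟨x, hx, hne.symm, he.symm⟩ hy)
  refine ⟨B0 ∩ B1, hB0.inter hB1, subset_inter hAB0 hAB1, ?_⟩
  intro x hx y hy he
  by_contra hne
  exact Set.disjoint_left.1 hd1 ⟨y, hy.1, hne, he⟩ hx.2

end LusinNovikov

section Small

variable {X Z : Type*} [MeasurableSpace X]

/-- measurable sets whose complement is covered by countably many Borel injectivity sets -/
def CoSmall (f : X → Z) (Y : Set X) : Prop :=
  MeasurableSet Y ∧ ∃ A : ℕ → Set X, (∀ n, MeasurableSet (A n)) ∧ (∀ n, InjOn f (A n)) ∧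
    Yᶜ ⊆ ⋃ n, A n

theorem CoSmall.iInter {f : X → Z} {ι : Type*} [Countable ι] {Y : ι → Set X}
    (h : ∀ i, CoSmall f (Y i)) : CoSmall f (⋂ i, Y i) := by
  refine ⟨MeasurableSet.iInter fun i => (h i).1, ?_⟩
  cases isEmpty_or_nonempty ι
  · exact ⟨fun _ => ∅, by simp, by simp, by simp⟩
  choose A hA hi hc using fun i => (h i).2
  obtain ⟨g, hg⟩ := exists_surjective_nat (ι × ℕ)
  refine ⟨fun n => A (g n).1 (g n).2, fun n => hA _ _, fun n => hi _ _, ?_⟩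
  intro x hx
  simp only [mem_compl_iff, mem_iInter, not_forall] at hx
  obtain ⟨i, hx⟩ := hx
  obtain ⟨k, hk⟩ := mem_iUnion.1 (hc i hx)
  obtain ⟨n, hn⟩ := hg (i, k)
  exact mem_iUnion.2 ⟨n, by simpa [hn] using hk⟩

theorem CoSmall.diff {f : X → Z} {Y B : Set X}
    (h : CoSmall f Y) (hB : MeasurableSet B) (hi : InjOn f B) : CoSmall f (Y \ B) := by
  have hBc : CoSmall f Bᶜ := ⟨hB.compl, fun _ => B, fun _ => hB, fun _ => hi, by
    simp [Set.iUnion_const]⟩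
  have := CoSmall.iInter (f := f) (Y := fun b : Bool => cond b Y Bᶜ) (by
    rintro (_ | _)
    · exact hBc
    · exact h)
  rwa [← inter_eq_iInter] at this

/-- a family of sets is good if on every cosmall set some fibre meets all of them -/
def Good (f : X → Z) (C : Set (Set X)) : Prop :=
  ∀ Y, CoSmall f Y → ∃ z, ∀ U ∈ C, ∃ x ∈ U ∩ Y, f x = z

end Small

theorem good_split {X Z : Type*} [MetricSpace X] [PolishSpace X]
    [MeasurableSpace X] [BorelSpace X]
    [TopologicalSpace Z] [T2Space Z] {f : X → Z} (hf : Continuous f)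
    {C : Set (Set X)} (hC : C.Countable) (hCo : ∀ U ∈ C, IsOpen U) {U : Set X} (hU : IsOpen U)
    (hg : Good f (insert U C)) {ε : ℝ} (hε : 0 < ε) :
    ∃ V : Bool → Set X, (∀ b, IsOpen (V b)) ∧ (∀ b, V b ⊆ U) ∧
      (∀ b, ∀ x ∈ V b, ∀ y ∈ V b, dist x y ≤ ε) ∧
      (∃ δ > 0, ∀ x ∈ V true, ∀ y ∈ V false, δ ≤ dist x y) ∧
      Good f (range V ∪ C) := by
  classical
  obtain ⟨b, hbc, -, hb⟩ := TopologicalSpace.exists_countable_basis X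
  let P : Set (Bool → Set X) := {V | (∀ i, V i ∈ b) ∧ (∀ b, V b ⊆ U) ∧
      (∀ b, ∀ x ∈ V b, ∀ y ∈ V b, dist x y ≤ ε) ∧
      (∃ δ > 0, ∀ x ∈ V true, ∀ y ∈ V false, δ ≤ dist x y)}
  have hP : P.Countable := by
    have : (Set.pi univ fun _ : Bool => b).Countable := Set.countable_univ_pi (fun _ => hbc)
    exact this.mono fun V hV => Set.mem_univ_pi.2 hV.1
  by_contra hcon
  have hbad : ∀ V : P, ∃ Y, CoSmall f Y ∧ ¬ ∃ z, ∀ W ∈ range V.1 ∪ C, ∃ x ∈ W ∩ Y, f x = z := by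
    intro V
    by_contra h
    push Not at h
    exact hcon ⟨V.1, fun i => hb.isOpen (V.2.1 i), V.2.2.1, V.2.2.2.1, V.2.2.2.2,
      fun Y hY => by simpa using h Y hY⟩
  choose Y hY hYbad using hbad
  have := hP.to_subtype
  have := hC.to_subtype
  have hYs := CoSmall.iInter hY
  set Ys := ⋂ i, Y i with hYsdef
  let A : Set X := ⋂ W : Option C, W.elim (U ∩ Ys) (fun W => {x | ∃ x' ∈ W.1 ∩ Ys, f x' = f x})
  have hA : AnalyticSet A := by
    refine AnalyticSet.iInter ?_
    rintro (_ | W)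
    · exact (hU.measurableSet.inter hYs.1).analyticSet
    · have h1 : AnalyticSet ((Prod.fst : X × X → X) ⁻¹' (W.1 ∩ Ys)) :=
        (((hCo _ W.2).measurableSet.inter hYs.1).analyticSet).preimage continuous_fst
      have h3 : AnalyticSet {p : X × X | f p.1 = f p.2} :=
        (isClosed_eq (hf.comp continuous_fst) (hf.comp continuous_snd)).analyticSet
      have := (analytic_inter h1 h3).image_of_continuous continuous_snd
      convert this using 1
      ext x
      simp only [Option.elim, mem_ofPred_eq, mem_image, mem_inter_iff, mem_preimage, Prod.exists]
      constructor
      · rintro ⟨y, h, h'⟩; exact ⟨y, x, ⟨h, h'⟩, rfl⟩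
      · rintro ⟨y, x', ⟨h, h'⟩, rfl⟩; exact ⟨y, h, h'⟩
  have hmemA : ∀ x, x ∈ A ↔ (x ∈ U ∩ Ys ∧ ∀ W ∈ C, ∃ x' ∈ W ∩ Ys, f x' = f x) := by
    intro x
    simp only [A, mem_iInter]
    constructor
    · intro h
      exact ⟨h none, fun W hW => h (some ⟨W, hW⟩)⟩
    · rintro ⟨h, h'⟩ (_ | W)
      · exact h
      · exact h' W.1 W.2
  have hinj : InjOn f A := by
    intro x hx y hy he
    by_contra hne
    rw [hmemA] at hx hy
    have hd : 0 < dist x y := dist_pos.2 hne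
    set r := min (ε / 2) (dist x y / 3) with hr
    have hr0 : 0 < r := lt_min (by linarith) (by linarith)
    have hr1 : r ≤ ε / 2 := min_le_left _ _
    have hr2 : r ≤ dist x y / 3 := min_le_right _ _
    obtain ⟨V, hVb, hxV, hV⟩ := hb.mem_nhds_iff.1
      (Filter.inter_mem (hU.mem_nhds hx.1.1) (Metric.ball_mem_nhds x hr0))
    obtain ⟨W, hWb, hyW, hW⟩ := hb.mem_nhds_iff.1
      (Filter.inter_mem (hU.mem_nhds hy.1.1) (Metric.ball_mem_nhds y hr0))
    have hdV : ∀ c : X, ∀ u ∈ Metric.ball c r, ∀ v ∈ Metric.ball c r, dist u v ≤ ε := by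
      intro c u hu v hv
      have := dist_triangle_right u v c
      rw [Metric.mem_ball] at hu hv
      linarith
    let VV : P := ⟨fun b => cond b V W, by
      refine ⟨?_, ?_, ?_, dist x y / 3, by linarith, ?_⟩
      · rintro (_ | _) <;> assumption
      · rintro (_ | _)
        · exact fun z hz => (hW hz).1
        · exact fun z hz => (hV hz).1
      · rintro (_ | _)
        · exact fun u hu v hv => hdV y u (hW hu).2 v (hW hv).2
        · exact fun u hu v hv => hdV x u (hV hu).2 v (hV hv).2
      · intro u hu v hv
        have h1 := (hV hu).2
        have h2 := (hW hv).2
        rw [Metric.mem_ball] at h1 h2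
        have := dist_triangle4_left u v x y
        have := dist_triangle4 x u v y
        rw [dist_comm x u] at this
        linarith⟩
    apply hYbad VV
    have hsub : Ys ⊆ Y VV := iInter_subset _ _
    refine ⟨f x, ?_⟩
    rintro T (⟨i, rfl⟩ | hT)
    · cases i
      · exact ⟨y, ⟨hyW, hsub hy.1.2⟩, he.symm⟩
      · exact ⟨x, ⟨hxV, hsub hx.1.2⟩, rfl⟩
    · obtain ⟨x', hx', h⟩ := hx.2 T hT
      exact ⟨x', ⟨hx'.1, hsub hx'.2⟩, h⟩
  obtain ⟨B, hB, hAB, hBi⟩ := exists_hull hf hA hinj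
  obtain ⟨z, hz⟩ := hg _ (hYs.diff hB hBi)
  obtain ⟨x, hx, rfl⟩ := hz U (mem_insert _ _)
  apply hx.2.2
  apply hAB
  rw [hmemA]
  refine ⟨⟨hx.1, hx.2.1⟩, fun W hW => ?_⟩
  obtain ⟨x', hx', h⟩ := hz W (mem_insert_of_mem _ hW)
  exact ⟨x', ⟨hx'.1, hx'.2.1⟩, h⟩

theorem good_split_all {X Z : Type*} [MetricSpace X] [PolishSpace X]
    [MeasurableSpace X] [BorelSpace X]
    [TopologicalSpace Z] [T2Space Z] {f : X → Z} (hf : Continuous f)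
    {ι : Type*} [Finite ι] (U : ι → Set X) (hU : ∀ i, IsOpen (U i))
    (hg : Good f (range U)) {ε : ℝ} (hε : 0 < ε) :
    ∃ V : ι → Bool → Set X, (∀ i b, IsOpen (V i b)) ∧ (∀ i b, V i b ⊆ U i) ∧
      (∀ i b, ∀ x ∈ V i b, ∀ y ∈ V i b, dist x y ≤ ε) ∧
      (∀ i, ∃ δ > 0, ∀ x ∈ V i true, ∀ y ∈ V i false, δ ≤ dist x y) ∧
      Good f {W | ∃ i b, W = V i b} := by
  classical
  have := Fintype.ofFinite ι
  have key : ∀ S : Finset ι, ∃ V : ι → Bool → Set X, (∀ i b, IsOpen (V i b)) ∧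
      (∀ i b, V i b ⊆ U i) ∧
      (∀ i ∈ S, ∀ b, ∀ x ∈ V i b, ∀ y ∈ V i b, dist x y ≤ ε) ∧
      (∀ i ∈ S, ∃ δ > 0, ∀ x ∈ V i true, ∀ y ∈ V i false, δ ≤ dist x y) ∧
      (∀ i ∉ S, V i = fun _ => U i) ∧
      Good f {W | ∃ i b, W = V i b} := by
    intro S
    induction S using Finset.induction_on with
    | empty =>
      refine ⟨fun i _ => U i, fun i _ => hU i, fun i _ => subset_rfl, by simp, by simp, by simp, ?_⟩
      convert hg using 1
      ext W
      simp [eq_comm]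
    | insert j S hj ih =>
      obtain ⟨V, h1, h2, h3, h4, h5, h6⟩ := ih
      have hsp := good_split hf (C := {W | ∃ i b, i ≠ j ∧ W = V i b}) (U := U j) (by
        have : {W | ∃ i b, i ≠ j ∧ W = V i b} ⊆ range (fun p : ι × Bool => V p.1 p.2) := by
          rintro _ ⟨i, b, -, rfl⟩
          exact ⟨(i, b), rfl⟩
        exact (countable_range _).mono this) (by
        rintro _ ⟨i, b, -, rfl⟩
        exact h1 i b) (hU j) (by
        intro Y hY
        obtain ⟨z, hz⟩ := h6 Y hY
        refine ⟨z, ?_⟩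
        rintro W (rfl | ⟨i, b, -, rfl⟩)
        · exact hz _ ⟨j, true, by rw [h5 j hj]⟩
        · exact hz _ ⟨i, b, rfl⟩) hε
      obtain ⟨V', g1, g2, g3, g4, g5⟩ := hsp
      refine ⟨Function.update V j V', ?_, ?_, ?_, ?_, ?_, ?_⟩
      · intro i b
        by_cases h : i = j
        · subst h; simpa using g1 b
        · simpa [h] using h1 i b
      · intro i b
        by_cases h : i = j
        · subst h; simpa using g2 b
        · simpa [h] using h2 i b
      · intro i hi b
        by_cases h : i = j
        · subst h; simpa using g3 b
        · simpa [h] using h3 i (Finset.mem_of_mem_insert_of_ne hi h) b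
      · intro i hi
        by_cases h : i = j
        · subst h; simpa using g4
        · simpa [h] using h4 i (Finset.mem_of_mem_insert_of_ne hi h)
      · intro i hi
        rw [Finset.mem_insert, not_or] at hi
        simpa [hi.1] using h5 i hi.2
      · intro Y hY
        obtain ⟨z, hz⟩ := g5 Y hY
        refine ⟨z, ?_⟩
        rintro _ ⟨i, b, rfl⟩
        by_cases h : i = j
        · subst h
          simpa using hz (V' b) (Or.inl ⟨b, rfl⟩)
        · simpa [h] using hz (V i b) (Or.inr ⟨i, b, h, rfl⟩)
  obtain ⟨V, h1, h2, h3, h4, -, h6⟩ := key Finset.univ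
  exact ⟨V, h1, h2, fun i => h3 i (Finset.mem_univ _), fun i => h4 i (Finset.mem_univ _), h6⟩

theorem good_step {X Z : Type*} [MetricSpace X] [PolishSpace X]
    [MeasurableSpace X] [BorelSpace X]
    [TopologicalSpace Z] [T2Space Z] {f : X → Z} (hf : Continuous f)
    (n : ℕ) (U : (Fin n → Bool) → Set X) (hU : (∀ i, IsOpen (U i)) ∧ Good f (range U)) :
    ∃ U' : (Fin (n + 1) → Bool) → Set X, ((∀ i, IsOpen (U' i)) ∧ Good f (range U')) ∧
      (∀ s, U' s ⊆ U (fun i => s i.castSucc)) ∧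
      (∀ s, ∀ x ∈ U' s, ∀ y ∈ U' s, dist x y ≤ (1 / 2 : ℝ) ^ n) ∧
      (∀ s t : Fin (n + 1) → Bool, (∀ i : Fin n, s i.castSucc = t i.castSucc) →
        s (Fin.last n) ≠ t (Fin.last n) → ∃ δ > 0, ∀ x ∈ U' s, ∀ y ∈ U' t, δ ≤ dist x y) := by
  obtain ⟨V, h1, h2, h3, h4, h5⟩ := good_split_all hf U hU.1 hU.2
    (ε := (1 / 2 : ℝ) ^ n) (by positivity)
  refine ⟨fun s => V (fun i => s i.castSucc) (s (Fin.last n)), ⟨fun s => h1 _ _, ?_⟩,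
    fun s => h2 _ _, fun s => h3 _ _, ?_⟩
  · intro Y hY
    obtain ⟨z, hz⟩ := h5 Y hY
    refine ⟨z, ?_⟩
    rintro _ ⟨s, rfl⟩
    exact hz _ ⟨_, _, rfl⟩
  · intro s t hst hne
    have he : (fun i : Fin n => s i.castSucc) = fun i : Fin n => t i.castSucc := funext hst
    obtain ⟨δ, hδ, h⟩ := h4 (fun i => s i.castSucc)
    refine ⟨δ, hδ, ?_⟩
    simp only [← he]
    cases hs : s (Fin.last n) <;> cases ht : t (Fin.last n)
    · simp [hs, ht] at hne
    · intro x hx y hy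
      rw [dist_comm]
      exact h y hy x hx
    · exact h
    · simp [hs, ht] at hne

theorem lusin_novikov_aux {X Z : Type*} [MetricSpace X] [CompleteSpace X] [PolishSpace X]
    [MeasurableSpace X] [BorelSpace X]
    [TopologicalSpace Z] [T2Space Z] {f : X → Z} (hf : Continuous f)
    (hc : ∀ z, (f ⁻¹' {z}).Countable) :
    ∃ A : ℕ → Set X, (∀ n, MeasurableSet (A n)) ∧ (∀ n, InjOn f (A n)) ∧ ⋃ n, A n = univ := by
  by_contra hcon
  have h0 : (∀ i : Fin 0 → Bool, IsOpen ((fun _ => univ : (Fin 0 → Bool) → Set X) i)) ∧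
      Good f (range (fun _ => univ : (Fin 0 → Bool) → Set X)) := by
    refine ⟨fun _ => isOpen_univ, ?_⟩
    rintro Y ⟨hY, A, hA, hi, hcov⟩
    rcases Y.eq_empty_or_nonempty with rfl | ⟨x, hx⟩
    · exact (hcon ⟨A, hA, hi, by simpa [univ_subset_iff] using hcov⟩).elim
    · refine ⟨f x, ?_⟩
      rintro _ ⟨-, rfl⟩
      exact ⟨x, ⟨mem_univ _, hx⟩, rfl⟩
  choose! F hF1 hF2 hF3 hF4 using good_step hf
  let U : ∀ n, (Fin n → Bool) → Set X :=
    fun n => Nat.rec (motive := fun n => (Fin n → Bool) → Set X) (fun _ => univ) F n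
  have hUs : ∀ n, U (n + 1) = F n (U n) := fun n => rfl
  have hU : ∀ n, (∀ i, IsOpen (U n i)) ∧ Good f (range (U n)) := by
    intro n
    induction n with
    | zero => exact h0
    | succ n ih => rw [hUs]; exact hF1 n _ ih
  have hmeet : ∀ n, ∃ z, ∀ s, ∃ x ∈ U n s, f x = z := by
    intro n
    obtain ⟨z, hz⟩ := (hU n).2 univ ⟨MeasurableSet.univ, fun _ => ∅, by simp, by simp, by simp⟩
    refine ⟨z, fun s => ?_⟩
    obtain ⟨x, hx, h⟩ := hz _ ⟨s, rfl⟩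
    exact ⟨x, hx.1, h⟩
  choose y x hxU hxy using hmeet
  have hanti : ∀ (w : ℕ → Bool) (n m : ℕ), n ≤ m → U m (fun i => w i) ⊆ U n (fun i => w i) := by
    intro w n m hnm
    induction m, hnm using Nat.le_induction with
    | base => exact subset_rfl
    | succ m _ ih =>
      refine Subset.trans ?_ ih
      rw [hUs]
      exact hF2 m _ (hU m) _
  have hcau : ∀ w : ℕ → Bool, CauchySeq fun n => x (n + 1) (fun i => w i) := by
    intro w
    refine cauchySeq_of_le_geometric (1 / 2) 1 (by norm_num) fun n => ?_
    rw [one_mul]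
    have h1 := hxU (n + 1) (fun i => w i)
    have h2 := hanti w (n + 1) (n + 2) (by omega) (hxU (n + 2) (fun i => w i))
    rw [hUs] at h1 h2
    exact hF3 n _ (hU n) _ _ h1 _ h2
  choose p hp using fun w => cauchySeq_tendsto_of_complete (hcau w)
  have hfib : ∀ w w', f (p w) = f (p w') := by
    intro w w'
    have h1 := (hf.tendsto _).comp (hp w)
    have h2 := (hf.tendsto _).comp (hp w')
    refine tendsto_nhds_unique h1 (h2.congr fun n => ?_)
    simp [hxy]
  have hpinj : Function.Injective p := by
    intro w w' he
    by_contra hne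
    have hex : ∃ n, w n ≠ w' n := Function.ne_iff.1 hne
    classical
    let n := Nat.find hex
    have hn : w n ≠ w' n := Nat.find_spec hex
    have hlt : ∀ i < n, w i = w' i := fun i hi => by
      by_contra h
      exact Nat.find_min hex hi h
    obtain ⟨δ, hδ, h⟩ := hF4 n _ (hU n) (fun i => w i) (fun i => w' i)
      (fun i => hlt _ i.2) hn
    have hl := (hp w).dist (hp w')
    rw [he, dist_self] at hl
    have : δ ≤ 0 := by
      refine ge_of_tendsto hl (Filter.eventually_atTop.2 ⟨n, fun m hm => ?_⟩)
      refine h _ ?_ _ ?_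
      · exact hanti w (n + 1) (m + 1) (by omega) (hxU (m + 1) _)
      · exact hanti w' (n + 1) (m + 1) (by omega) (hxU (m + 1) _)
    linarith
  have hcount : (univ : Set (ℕ → Bool)).Countable := by
    refine MapsTo.countable_of_injOn (f := p) (t := f ⁻¹' {f (p fun _ => true)}) ?_
      hpinj.injOn (hc _)
    intro w _
    exact hfib _ _
  rw [countable_univ_iff] at hcount
  obtain ⟨g, hg⟩ := exists_surjective_nat (ℕ → Bool)
  obtain ⟨n, hn⟩ := hg fun n => !(g n n)
  have := congrFun hn n
  simp at this

theorem lusin_novikov_polish {X Z : Type*} [TopologicalSpace X] [PolishSpace X]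
    [MeasurableSpace X] [BorelSpace X]
    [TopologicalSpace Z] [T2Space Z] {f : X → Z} (hf : Continuous f)
    (hc : ∀ z, (f ⁻¹' {z}).Countable) :
    ∃ A : ℕ → Set X, (∀ n, MeasurableSet (A n)) ∧ (∀ n, InjOn f (A n)) ∧ ⋃ n, A n = univ := by
  let := TopologicalSpace.upgradeIsCompletelyMetrizable X
  exact lusin_novikov_aux hf hc

theorem lusin_novikov {X : Type*} [MeasurableSpace X] [StandardBorelSpace X] {f : X → X}
    (hf : Measurable f) (hc : ∀ z, (f ⁻¹' {z}).Countable) :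
    ∃ A : ℕ → Set X, (∀ n, MeasurableSet (A n)) ∧ (∀ n, InjOn f (A n)) ∧ ⋃ n, A n = univ := by
  let := upgradeStandardBorel X
  let t0 : TopologicalSpace X := inferInstance
  have hp0 : PolishSpace X := inferInstance
  have hb0 : BorelSpace X := inferInstance
  obtain ⟨t', hle, hfc, hpol⟩ := hf.exists_continuous
  have hb : @BorelSpace X t' _ := by
    refine @BorelSpace.mk X t' _ ?_
    rw [borel_eq_borel_of_le hpol hp0 hle]
    exact hb0.measurable_eq
  exact @lusin_novikov_polish X X t' hpol _ hb t0 inferInstance f hfc hc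

/-- pieces on which `f` extends to a Borel involution -/
def Nice {X : Type*} (f : X → X) (A : Set X) : Prop :=
  InjOn f A ∧ ((∀ x ∈ A, f x = x) ∨ Disjoint A (f '' A))

theorem Nice.mono {X : Type*} {f : X → X} {A B : Set X} (h : Nice f B) (hAB : A ⊆ B) :
    Nice f A :=
  ⟨h.1.mono hAB, h.2.imp (fun h x hx => h x (hAB hx)) fun h => h.mono hAB (image_mono hAB)⟩

theorem exists_nice_partition {X : Type*} [MeasurableSpace X] [StandardBorelSpace X] {f : X → X}
    (hf : Measurable f) (hc : ∀ z, (f ⁻¹' {z}).Countable) :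
    ∃ A : ℕ → Set X, (∀ n, MeasurableSet (A n)) ∧ (∀ n, Nice f (A n)) ∧ ⋃ n, A n = univ ∧
      Pairwise (Function.onFun Disjoint A) := by
  suffices h : ∃ A : ℕ → Set X, (∀ n, MeasurableSet (A n)) ∧ (∀ n, Nice f (A n)) ∧
      ⋃ n, A n = univ by
    obtain ⟨A, h1, h2, h3⟩ := h
    exact ⟨disjointed A, MeasurableSet.disjointed h1, fun n => (h2 n).mono (disjointed_subset A n),
      by rw [iUnion_disjointed, h3], disjoint_disjointed A⟩
  obtain ⟨A, hA, hi, hcov⟩ := lusin_novikov hf hc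
  let := upgradeStandardBorel X
  obtain ⟨b, hbc, -, hb⟩ := TopologicalSpace.exists_countable_basis X
  have := hbc.to_subtype
  let D : ℕ × Option b → Set X := fun p => A p.1 ∩
    p.2.elim {x | f x = x} (fun W => W.1 ∩ f ⁻¹' (W.1)ᶜ)
  obtain ⟨g, hg⟩ := exists_surjective_nat (ℕ × Option b)
  refine ⟨fun n => D (g n), fun n => ?_, fun n => ?_, ?_⟩
  · refine (hA _).inter ?_
    rcases (g n).2 with _ | W
    · exact measurableSet_eq_fun hf measurable_id
    · have hW : MeasurableSet W.1 := (hb.isOpen W.2).measurableSet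
      exact hW.inter (hf hW.compl)
  · refine ⟨(hi _).mono inter_subset_left, ?_⟩
    simp only [D]
    rcases (g n).2 with _ | W
    · exact Or.inl fun x hx => hx.2
    · refine Or.inr (Set.disjoint_left.2 ?_)
      rintro _ hx ⟨y, hy, rfl⟩
      exact hy.2.2 hx.2.1
  · refine eq_univ_of_forall fun x => ?_
    obtain ⟨n, hn⟩ := mem_iUnion.1 (hcov ▸ mem_univ x)
    by_cases hx : f x = x
    · obtain ⟨k, hk⟩ := hg (n, none)
      refine mem_iUnion.2 ⟨k, ?_⟩
      simp only [hk]
      exact ⟨hn, hx⟩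
    · obtain ⟨W, hW, hxW, hsub⟩ := hb.mem_nhds_iff.1 (isOpen_ne.mem_nhds (Ne.symm hx))
      obtain ⟨k, hk⟩ := hg (n, some ⟨W, hW⟩)
      refine mem_iUnion.2 ⟨k, ?_⟩
      simp only [hk]
      exact ⟨hn, hxW, fun h => hsub h rfl⟩

theorem exists_involution {X : Type*} [MeasurableSpace X] [StandardBorelSpace X] {f : X → X}
    (hf : Measurable f) {E : X → X → Prop} (hE : Equivalence E) (hfE : ∀ x, E x (f x))
    {A : Set X} (hA : MeasurableSet A) (hn : Nice f A) :
    ∃ T : X ≃ᵐ X, (∀ x, E (T x) x) ∧ ∀ x ∈ A, T (f x) = x := by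
  classical
  rcases hn with ⟨hi, h | hd⟩
  · exact ⟨MeasurableEquiv.refl X, fun x => hE.refl _, fun x hx => h x hx⟩
  rcases isEmpty_or_nonempty X with hX | hX
  · exact ⟨MeasurableEquiv.refl X, fun x => hE.refl _, fun x => (hX.false x).elim⟩
  let g := Function.invFunOn f A
  have hg : ∀ x ∈ A, g (f x) = x := fun x hx => hi.leftInvOn_invFunOn hx
  have hd' : ∀ x ∈ A, f x ∉ A := fun x hx h => Set.disjoint_left.1 hd h ⟨x, hx, rfl⟩
  let T : X → X := fun x => if x ∈ A then f x else if x ∈ f '' A then g x else x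
  have hT1 : ∀ x ∈ A, T x = f x := fun x hx => if_pos hx
  have hT2 : ∀ x ∈ A, T (f x) = x := fun x hx => by
    simp only [T]
    rw [if_neg (hd' x hx), if_pos ⟨x, hx, rfl⟩, hg x hx]
  have hT3 : ∀ x, x ∉ A → x ∉ f '' A → T x = x := fun x h1 h2 => by
    simp only [T]
    rw [if_neg h1, if_neg h2]
  have hinv : Function.Involutive T := by
    intro x
    by_cases hx : x ∈ A
    · rw [hT1 x hx, hT2 x hx]
    · by_cases hx' : x ∈ f '' A
      · obtain ⟨y, hy, rfl⟩ := hx'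
        rw [hT2 y hy, hT1 y hy]
      · rw [hT3 x hx hx', hT3 x hx hx']
  have himg : ∀ S, MeasurableSet S → S ⊆ A → MeasurableSet (f '' S) := fun S hS hSA =>
    hS.image_of_measurable_injOn hf (hi.mono hSA)
  have hTm : Measurable T := by
    intro S hS
    have : T ⁻¹' S = (A ∩ f ⁻¹' S) ∪ f '' (A ∩ S) ∪ ((Aᶜ ∩ (f '' A)ᶜ) ∩ S) := by
      ext x
      by_cases hx : x ∈ A
      · have hx' : x ∉ f '' A := Set.disjoint_left.1 hd hx
        have hx'' : x ∉ f '' (A ∩ S) := fun h => hx' (image_mono inter_subset_left h)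
        simp only [mem_preimage, mem_union, mem_inter_iff, mem_compl_iff, hx, hx'', hT1 x hx]
        tauto
      · by_cases hx' : x ∈ f '' A
        · obtain ⟨y, hy, rfl⟩ := hx'
          have h1 : f y ∈ f '' (A ∩ S) ↔ y ∈ S := by
            constructor
            · rintro ⟨y', hy', h⟩
              rw [← hi hy'.1 hy h]; exact hy'.2
            · exact fun h => ⟨y, ⟨hy, h⟩, rfl⟩
          have h2 : f y ∈ f '' A := ⟨y, hy, rfl⟩
          simp only [mem_preimage, mem_union, mem_inter_iff, mem_compl_iff, hx, h1, h2, hT2 y hy]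
          tauto
        · have hx'' : x ∉ f '' (A ∩ S) := fun h => hx' (image_mono inter_subset_left h)
          simp only [mem_preimage, mem_union, mem_inter_iff, mem_compl_iff, hx, hx', hx'',
            hT3 x hx hx']
          tauto
    rw [this]
    exact ((hA.inter (hf hS)).union (himg _ (hA.inter hS) inter_subset_left)).union
      ((hA.compl.inter (himg A hA subset_rfl).compl).inter hS)
  refine ⟨⟨hinv.toPerm T, hTm, hTm⟩, ?_, hT2⟩
  intro x
  change E (T x) x
  by_cases hx : x ∈ A
  · rw [hT1 x hx]; exact hE.symm (hfE x)
  · by_cases hx' : x ∈ f '' A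
    · obtain ⟨y, hy, rfl⟩ := hx'
      rw [hT2 y hy]; exact hfE y
    · rw [hT3 x hx hx']; exact hE.refl _

/-- For a `ρ`-invariant measure `μ`, `μ(φ⁻¹(B)) = ∫_B |φ⁻¹(x)|^x_ρ dμ(x)` for all Borel
`B ⊆ X` and Borel `φ : X → X` whose graph is contained in `E`. -/
theorem stmt9 [MeasurableSpace X] [StandardBorelSpace X]
    (E : X → X → Prop) (hE : IsCBER E)
    (ρ : X → X → ℝ) (hρ : IsCocycle E ρ)
    (μ : Measure X) (hμ : IsInvariant E ρ μ) :
    ∀ B : Set X, MeasurableSet B → ∀ φ : X → X, Measurable φ → (∀ x, E x (φ x)) →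
      μ (φ ⁻¹' B) = ∫⁻ x in B, eSize ρ (φ ⁻¹' {x}) x ∂μ := by
  intro B hB φ hφ hφE
  have hc : ∀ z, (φ ⁻¹' {z}).Countable := fun z => by
    refine (hE.2.2 z).mono fun x hx => ?_
    have h : φ x = z := hx
    exact h ▸ hE.1.symm (hφE x)
  obtain ⟨A, hA, hn, hcov, hdis⟩ := exists_nice_partition hφ hc
  choose T hTE hT using fun n => exists_involution hφ hE.1 hφE (hA n) (hn n)
  have himg : ∀ n, MeasurableSet (φ '' A n) := fun n =>
    (hA n).image_of_measurable_injOn hφ (hn n).1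
  have hsize : ∀ x, eSize ρ (φ ⁻¹' {x}) x =
      ∑' n, (φ '' A n).indicator (fun x => ENNReal.ofReal (ρ (T n x) x)) x := by
    intro x
    have h1 : φ ⁻¹' {x} = ⋃ n, A n ∩ φ ⁻¹' {x} := by rw [← iUnion_inter, hcov, univ_inter]
    have h2 : Pairwise (Function.onFun Disjoint fun n => A n ∩ φ ⁻¹' {x}) := fun i j hij =>
      (hdis hij).mono inter_subset_left inter_subset_left
    unfold eSize
    rw [h1, ← (Set.unionEqSigmaOfDisjoint h2).symm.tsum_eq, ENNReal.tsum_sigma']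
    refine tsum_congr fun n => ?_
    by_cases hx : x ∈ φ '' A n
    · rw [indicator_of_mem hx]
      obtain ⟨y, hy, rfl⟩ := hx
      have h3 : A n ∩ φ ⁻¹' {φ y} = {y} := by
        ext y'
        constructor
        · rintro ⟨h, h'⟩
          exact (hn n).1 h hy h'
        · rintro rfl
          exact ⟨hy, rfl⟩
      rw [hT n y hy]
      change ∑' c : ↥(A n ∩ φ ⁻¹' {φ y}), ENNReal.ofReal (ρ c (φ y)) = _
      rw [h3]
      exact tsum_singleton y fun c => ENNReal.ofReal (ρ c (φ y))
    · rw [indicator_of_notMem hx]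
      have : IsEmpty ↥(A n ∩ φ ⁻¹' {x}) := ⟨fun c => hx ⟨c.1, c.2.1, c.2.2⟩⟩
      exact tsum_empty
  have hmeas : ∀ n, Measurable fun x => ENNReal.ofReal (ρ (T n x) x) := fun n =>
    (hρ.1.comp ((T n).measurable.prodMk measurable_id)).ennreal_ofReal
  have hpiece : ∀ n, μ (A n ∩ φ ⁻¹' B) =
      ∫⁻ x in B, (φ '' A n).indicator (fun x => ENNReal.ofReal (ρ (T n x) x)) x ∂μ := by
    intro n
    rw [lintegral_indicator (himg n), Measure.restrict_restrict (himg n),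
      ← hμ (T n) (hTE n) _ ((himg n).inter hB)]
    congr 1
    ext x
    constructor
    · rintro ⟨h, h'⟩
      exact ⟨φ x, ⟨⟨x, h, rfl⟩, h'⟩, hT n x h⟩
    · rintro ⟨_, ⟨⟨y, hy, rfl⟩, h'⟩, rfl⟩
      rw [hT n y hy]
      exact ⟨hy, h'⟩
  calc μ (φ ⁻¹' B) = μ (⋃ n, A n ∩ φ ⁻¹' B) := by rw [← iUnion_inter, hcov, univ_inter]
    _ = ∑' n, μ (A n ∩ φ ⁻¹' B) := measure_iUnion
        (fun i j hij => (hdis hij).mono inter_subset_left inter_subset_left)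
        (fun n => (hA n).inter (hφ hB))
    _ = ∑' n, ∫⁻ x in B, (φ '' A n).indicator (fun x => ENNReal.ofReal (ρ (T n x) x)) x ∂μ :=
        tsum_congr hpiece
    _ = ∫⁻ x in B, ∑' n, (φ '' A n).indicator (fun x => ENNReal.ofReal (ρ (T n x) x)) x ∂μ :=
        (lintegral_tsum fun n => ((hmeas n).indicator (himg n)).aemeasurable).symm
    _ = _ := by simp only [hsize]

end CocycleNadkarni
end

section
/- Let X be a standard Borel space, E a countable Borel equivalence relation on X, and ρ : E → (0,∞) a Borel cocycle. If there is a Borel compression φ : X → X of ρ over a finite Borel subequivalence relation F of E, then there is no ρ-invariant Borel probability measure on X. -/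
open MeasureTheory Set ENNReal

namespace CocycleNadkarni

variable {X : Type*} {Γ : Type*}

section Helpers

open Filter Topology


theorem analytic_approx {X : Type*} [TopologicalSpace X] [PolishSpace X] [MeasurableSpace X]
    [BorelSpace X] (μ : Measure X) [IsFiniteMeasure μ] (g : (ℕ → ℕ) → X) (hg : Continuous g)
    (c : ℝ≥0∞) (hc : c < μ (range g)) :
    ∃ K, IsCompact K ∧ K ⊆ range g ∧ c ≤ μ K := by
  have step : ∀ (n : ℕ) (V : {V : Set (ℕ → ℕ) // c < μ (g '' V)}),
      ∃ k : ℕ, c < μ (g '' (V.1 ∩ {x | x n ≤ k})) := by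
    rintro n ⟨V, hV⟩
    have h1 : g '' V = ⋃ k : ℕ, g '' (V ∩ {x | x n ≤ k}) := by
      rw [← image_iUnion, ← inter_iUnion]
      congr 1
      ext x
      simp only [mem_inter_iff, mem_iUnion, mem_ofPred_eq]
      exact ⟨fun h => ⟨h, x n, le_rfl⟩, fun h => h.1⟩
    have h2 : Monotone fun k : ℕ => g '' (V ∩ {x | x n ≤ k}) := by
      intro a b hab
      apply image_mono
      rintro x ⟨hx, hx'⟩
      exact ⟨hx, le_trans hx' hab⟩
    rw [h1, h2.measure_iUnion] at hV
    exact lt_iSup_iff.1 hV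
  choose k hk using step
  let W : ℕ → {V : Set (ℕ → ℕ) // c < μ (g '' V)} := fun n =>
    Nat.rec ⟨univ, by rwa [image_univ]⟩ (fun n V => ⟨V.1 ∩ {x | x n ≤ k n V}, hk n V⟩) n
  let b : ℕ → ℕ := fun n => k n (W n)
  have hW : ∀ n, (W n).1 = {x | ∀ i < n, x i ≤ b i} := by
    intro n
    induction n with
    | zero => simp [W]
    | succ n ih =>
      have : (W (n+1)).1 = (W n).1 ∩ {x | x n ≤ b n} := rfl
      rw [this, ih]
      ext x
      simp only [mem_inter_iff, mem_ofPred_eq]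
      constructor
      · rintro ⟨h1, h2⟩ i hi
        rcases Nat.lt_succ_iff_lt_or_eq.1 hi with h | rfl
        · exact h1 i h
        · exact h2
      · intro h
        exact ⟨fun i hi => h i (by omega), h n (by omega)⟩
  let K : Set (ℕ → ℕ) := Set.pi univ (fun i => Iic (b i))
  have hK : IsCompact K := isCompact_univ_pi (fun i => (Set.finite_Iic (b i)).isCompact)
  refine ⟨g '' K, hK.image hg, image_subset_range _ _, ?_⟩
  by_contra! hlt
  obtain ⟨O, hO, hOo, hOc⟩ := Set.exists_isOpen_lt_of_lt (g '' K) c hlt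
  have hne : ∀ n, ∃ x, (∀ i < n, x i ≤ b i) ∧ g x ∉ O := by
    intro n
    by_contra! h
    have : μ (g '' (W n).1) ≤ μ O := by
      apply measure_mono
      rintro _ ⟨x, hx, rfl⟩
      rw [hW] at hx
      exact h x hx
    exact absurd ((W n).2.trans_le this) (not_lt.2 hOc.le)
  choose x hx hxO using hne
  let y : ℕ → ℕ → ℕ := fun n i => min (x n i) (b i)
  have hy : ∀ n, y n ∈ K := fun n i _ => mem_Iic.2 (min_le_right _ _)
  obtain ⟨a, ha, φ, hφ, hlim⟩ := hK.tendsto_subseq hy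
  have hlim2 : Tendsto (x ∘ φ) atTop (𝓝 a) := by
    rw [tendsto_pi_nhds] at hlim ⊢
    intro i
    refine (hlim i).congr' ?_
    filter_upwards [eventually_gt_atTop i] with n hn
    have : i < φ n := hn.trans_le (hφ.id_le n)
    simp only [y, Function.comp]
    exact min_eq_left (hx (φ n) i this)
  have h3 : ∀ᶠ n in atTop, g ((x ∘ φ) n) ∈ O :=
    (hg.tendsto a).comp hlim2 |>.eventually (hOo.mem_nhds (hO ⟨a, ha, rfl⟩))
  obtain ⟨n, hn⟩ := h3.exists
  exact hxO _ hn

theorem analytic_nullMeasurable {X : Type*} [TopologicalSpace X] [PolishSpace X]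
    [MeasurableSpace X] [BorelSpace X] (μ : Measure X) [IsFiniteMeasure μ] {s : Set X}
    (hs : AnalyticSet s) : NullMeasurableSet s μ := by
  rw [AnalyticSet] at hs
  rcases hs with rfl | ⟨g, hg, rfl⟩
  · exact MeasurableSet.empty.nullMeasurableSet
  by_cases h0 : μ (range g) = 0
  · exact NullMeasurableSet.of_null h0
  obtain ⟨u, -, hu, hlim⟩ := exists_seq_strictMono_tendsto' (pos_iff_ne_zero.2 h0)
  choose K hK hKs hKm using fun n => analytic_approx μ g hg (u n) (hu n).2
  have hmeas : MeasurableSet (⋃ n, K n) := MeasurableSet.iUnion fun n => (hK n).measurableSet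
  have hsub : (⋃ n, K n) ⊆ range g := iUnion_subset hKs
  have hge : μ (range g) ≤ μ (⋃ n, K n) :=
    le_of_tendsto' hlim fun n => (hKm n).trans (measure_mono (subset_iUnion K n))
  have h1 : (⋃ n, K n) =ᵐ[μ] toMeasurable μ (range g) := by
    apply ae_eq_of_subset_of_measure_ge (hsub.trans (subset_toMeasurable _ _)) _
      hmeas.nullMeasurableSet (measure_ne_top _ _)
    rwa [measure_toMeasurable]
  have h2 : (⋃ n, K n) =ᵐ[μ] range g := by
    refine (LE.le.eventuallyLE hsub).antisymm ?_
    exact (LE.le.eventuallyLE (subset_toMeasurable μ _)).trans h1.symm.le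
  exact hmeas.nullMeasurableSet.congr h2

/-- `A` is, up to a null set of base points, covered by countably many Borel sets on which `f` is
injective. -/
def GoodSet {X Z : Type*} [MeasurableSpace X] [MeasurableSpace Z] (μ : Measure X) (f : Z → X)
    (A : Set Z) : Prop :=
  ∃ N : Set X, μ N = 0 ∧ ∃ B : ℕ → Set Z, (∀ n, MeasurableSet (B n)) ∧ (∀ n, InjOn f (B n)) ∧
    ∀ z ∈ A, f z ∉ N → ∃ n, z ∈ B n

theorem GoodSet.mono {X Z : Type*} [MeasurableSpace X] [MeasurableSpace Z] {μ : Measure X}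
    {f : Z → X} {A A' : Set Z} (h : GoodSet μ f A) (hA : A' ⊆ A) : GoodSet μ f A' := by
  obtain ⟨N, hN, B, h1, h2, h3⟩ := h
  exact ⟨N, hN, B, h1, h2, fun z hz => h3 z (hA hz)⟩

theorem GoodSet.iUnion {X Z : Type*} [MeasurableSpace X] [MeasurableSpace Z] {μ : Measure X}
    {f : Z → X} {A : ℕ → Set Z} (h : ∀ n, GoodSet μ f (A n)) : GoodSet μ f (⋃ n, A n) := by
  choose N hN B h1 h2 h3 using h
  refine ⟨⋃ n, N n, measure_iUnion_null hN, fun m => B m.unpair.1 m.unpair.2, fun _ => h1 _ _,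
    fun _ => h2 _ _, ?_⟩
  intro z hz hzN
  obtain ⟨n, hn⟩ := mem_iUnion.1 hz
  obtain ⟨m, hm⟩ := h3 n z hn (fun h => hzN (mem_iUnion.2 ⟨n, h⟩))
  exact ⟨Nat.pair n m, by simpa using hm⟩

theorem GoodSet.union {X Z : Type*} [MeasurableSpace X] [MeasurableSpace Z] {μ : Measure X}
    {f : Z → X} {A A' : Set Z} (h : GoodSet μ f A) (h' : GoodSet μ f A') :
    GoodSet μ f (A ∪ A') := by
  have := GoodSet.iUnion (μ := μ) (f := f) (A := fun n : ℕ => if n = 0 then A else A')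
    (by intro n; split_ifs <;> assumption)
  refine this.mono ?_
  rintro z (hz | hz)
  · exact mem_iUnion.2 ⟨0, by simpa using hz⟩
  · exact mem_iUnion.2 ⟨1, by simpa using hz⟩

theorem GoodSet.of_injOn {X Z : Type*} [MeasurableSpace X] [MeasurableSpace Z] {μ : Measure X}
    {f : Z → X} {A : Set Z} (hA : MeasurableSet A) (h : InjOn f A) : GoodSet μ f A :=
  ⟨∅, measure_empty, fun _ => A, fun _ => hA, fun _ => h, fun _ hz _ => ⟨0, hz⟩⟩

theorem exists_maximal_base {X Z : Type*} [MeasurableSpace X] [MeasurableSpace Z] (μ : Measure X)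
    [IsFiniteMeasure μ] (f : Z → X) (U : Set Z) :
    ∃ S, MeasurableSet S ∧ GoodSet μ f (U ∩ f ⁻¹' S) ∧
      ∀ Q, MeasurableSet Q → GoodSet μ f (U ∩ f ⁻¹' Q) → Disjoint S Q → μ Q = 0 := by
  let 𝒮 : Set (Set X) := {S | MeasurableSet S ∧ GoodSet μ f (U ∩ f ⁻¹' S)}
  have hne : (μ '' 𝒮).Nonempty := by
    refine ⟨μ ∅, ∅, ⟨MeasurableSet.empty, ?_⟩, rfl⟩
    have : GoodSet μ f (∅ : Set Z) := GoodSet.of_injOn MeasurableSet.empty (by simp)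
    simpa using this
  obtain ⟨u, -, hlim, hu⟩ := exists_seq_tendsto_sSup hne (OrderTop.bddAbove _)
  choose S hS hSu using hu
  have hT : (⋃ n, S n) ∈ 𝒮 := by
    refine ⟨MeasurableSet.iUnion fun n => (hS n).1, ?_⟩
    rw [preimage_iUnion, inter_iUnion]
    exact GoodSet.iUnion fun n => (hS n).2
  have hmax : sSup (μ '' 𝒮) ≤ μ (⋃ n, S n) := by
    refine le_of_tendsto' hlim fun n => ?_
    rw [← hSu n]
    exact measure_mono (subset_iUnion S n)
  refine ⟨⋃ n, S n, hT.1, hT.2, fun Q hQ hQg hd => ?_⟩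
  have h1 : (⋃ n, S n) ∪ Q ∈ 𝒮 := by
    refine ⟨hT.1.union hQ, ?_⟩
    rw [preimage_union, inter_union_distrib_left]
    exact hT.2.union hQg
  have h2 : μ ((⋃ n, S n) ∪ Q) ≤ μ (⋃ n, S n) := (le_sSup (mem_image_of_mem μ h1)).trans hmax
  rw [measure_union hd hQ] at h2
  by_contra h0
  exact absurd h2 (not_le.2 (ENNReal.lt_add_right (measure_ne_top _ _) h0))

theorem good_univ_of_continuous {X Z : Type*} [TopologicalSpace X] [PolishSpace X]
    [MeasurableSpace X] [BorelSpace X] [TopologicalSpace Z] [PolishSpace Z]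
    [MeasurableSpace Z] [BorelSpace Z] (μ : Measure X) [IsFiniteMeasure μ] (f : Z → X)
    (hf : Continuous f) (hcount : ∀ x, (f ⁻¹' {x}).Countable) : GoodSet μ f univ := by
  obtain ⟨b, hbc, -, hb⟩ := TopologicalSpace.exists_countable_basis Z
  by_cases hbne : b.Nonempty
  swap
  · have : IsEmpty Z := by
      constructor
      intro z
      obtain ⟨v, hv, -⟩ := hb.exists_subset_of_mem_open (mem_univ z) isOpen_univ
      exact hbne ⟨v, hv⟩
    exact GoodSet.of_injOn MeasurableSet.univ (fun z => isEmptyElim z)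
  obtain ⟨U, rfl⟩ := hbc.exists_eq_range hbne
  have hUo : ∀ n, IsOpen (U n) := fun n => hb.isOpen ⟨n, rfl⟩
  have hU : ∀ z (O : Set Z), IsOpen O → z ∈ O → ∃ n, z ∈ U n ∧ U n ⊆ O := by
    intro z O hO hz
    obtain ⟨_, ⟨n, rfl⟩, h1, h2⟩ := hb.exists_subset_of_mem_open hz hO
    exact ⟨n, h1, h2⟩
  choose S hSm hSg hSmax using fun n => exists_maximal_base μ f (U n)
  let R : Set Z := ⋃ n, U n ∩ f ⁻¹' (S n)
  have hRg : GoodSet μ f R := GoodSet.iUnion hSg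
  have hRm : MeasurableSet R :=
    MeasurableSet.iUnion fun n => (hUo n).measurableSet.inter (hf.measurable (hSm n))
  -- points of the remainder
  let A : ℕ → Set X := fun n => f '' (Rᶜ ∩ U n)
  have hA : ∀ O : Set Z, IsOpen O → NullMeasurableSet (f '' (Rᶜ ∩ O)) μ := fun O hO =>
    analytic_nullMeasurable μ
      ((hRm.compl.inter hO.measurableSet).analyticSet_image hf.measurable)
  let D : ℕ → Set X := fun n => ⋃ i : ℕ, ⋃ j : ℕ, ⋃ _ : Disjoint (U i) (U j),
    f '' (Rᶜ ∩ (U n ∩ U i)) ∩ f '' (Rᶜ ∩ (U n ∩ U j))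
  have hD : ∀ n, NullMeasurableSet (D n) μ := fun n =>
    NullMeasurableSet.iUnion fun i => NullMeasurableSet.iUnion fun j =>
      NullMeasurableSet.iUnion fun _ =>
      (hA _ ((hUo n).inter (hUo i))).inter (hA _ ((hUo n).inter (hUo j)))
  have hinj : ∀ n z z', z ∉ R → z' ∉ R → z ∈ U n → z' ∈ U n → f z = f z' → f z ∉ D n →
      z = z' := by
    intro n z z' hz hz' hzU hzU' hff hzD
    by_contra hne
    obtain ⟨O, O', hO, hO', hzO, hzO', hdis⟩ := t2_separation hne
    obtain ⟨i, hi, hiO⟩ := hU z O hO hzO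
    obtain ⟨j, hj, hjO⟩ := hU z' O' hO' hzO'
    apply hzD
    refine mem_iUnion.2 ⟨i, mem_iUnion.2 ⟨j, mem_iUnion.2 ⟨hdis.mono hiO hjO, ?_⟩⟩⟩
    exact ⟨⟨z, ⟨hz, hzU, hi⟩, rfl⟩, ⟨z', ⟨hz', hzU', hj⟩, hff.symm⟩⟩
  have hQ : ∀ n, μ (A n \ D n) = 0 := by
    intro n
    obtain ⟨Q, hQs, hQm, hQe⟩ :=
      ((hA _ (hUo n)).diff (hD n)).exists_measurable_subset_ae_eq
    rw [← measure_congr hQe]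
    refine hSmax n Q hQm ?_ ?_
    · have h1 : GoodSet μ f (Rᶜ ∩ U n ∩ f ⁻¹' Q) := by
        refine GoodSet.of_injOn
          ((hRm.compl.inter (hUo n).measurableSet).inter (hf.measurable hQm)) ?_
        rintro z ⟨⟨hz, hzU⟩, hzQ⟩ z' ⟨⟨hz', hzU'⟩, -⟩ hzz
        exact hinj n z z' hz hz' hzU hzU' hzz (hQs hzQ).2
      refine (hRg.union h1).mono ?_
      rintro z ⟨hz, hzQ⟩
      by_cases hzR : z ∈ R
      · exact Or.inl hzR
      · exact Or.inr ⟨⟨hzR, hz⟩, hzQ⟩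
    · rw [Set.disjoint_left]
      intro x hxS hxQ
      obtain ⟨z, ⟨hzR, hzU⟩, rfl⟩ := (hQs hxQ).1
      exact hzR (mem_iUnion.2 ⟨n, hzU, hxS⟩)
  have hrest : GoodSet μ f Rᶜ := by
    refine ⟨⋃ n, A n \ D n, measure_iUnion_null hQ, fun _ => ∅, fun _ => MeasurableSet.empty,
      fun _ => by simp, ?_⟩
    intro z hzR hzN
    exfalso
    let C : Set Z := f ⁻¹' {f z} ∩ Rᶜ
    have hCc : IsClosed C := by
      rw [← isOpen_compl_iff, isOpen_iff_mem_nhds]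
      intro w hw
      by_cases hwf : f w = f z
      · have hwR : w ∈ R := by
          by_contra h
          exact hw ⟨hwf, h⟩
        obtain ⟨n, hn, hnS⟩ := mem_iUnion.1 hwR
        refine mem_of_superset ((hUo n).mem_nhds hn) ?_
        rintro v hv ⟨hv1, hv2⟩
        refine hv2 (mem_iUnion.2 ⟨n, hv, ?_⟩)
        have h1 : f v = f z := hv1
        have h2 : f w ∈ S n := hnS
        change f v ∈ S n
        rwa [h1, ← hwf]
      · have : IsOpen (f ⁻¹' {f z}ᶜ) := (isClosed_singleton.isOpen_compl).preimage hf
        refine mem_of_superset (this.mem_nhds hwf) ?_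
        rintro v hv ⟨hv1, -⟩
        exact hv hv1
    have hCp : Preperfect C := by
      rintro w ⟨hwf, hwR⟩
      rw [accPt_iff_nhds]
      intro O hO
      obtain ⟨O', hO'O, hO', hwO'⟩ := mem_nhds_iff.1 hO
      obtain ⟨n, hn, hnO⟩ := hU w O' hO' hwO'
      have hwf' : f w = f z := hwf
      have h1 : f w ∈ A n := ⟨w, ⟨hwR, hn⟩, rfl⟩
      have h2 : f w ∈ D n := by
        by_contra h
        rw [hwf'] at h1 h
        exact hzN (mem_iUnion.2 ⟨n, h1, h⟩)
      obtain ⟨i, h2⟩ := mem_iUnion.1 h2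
      obtain ⟨j, h2⟩ := mem_iUnion.1 h2
      obtain ⟨hij, ⟨v, ⟨hvR, hvn, hvi⟩, hvf⟩, ⟨v', ⟨hvR', hvn', hvj⟩, hvf'⟩⟩ := mem_iUnion.1 h2
      by_cases hvw : v = w
      · refine ⟨v', ⟨hO'O (hnO hvn'), ?_, hvR'⟩, ?_⟩
        · exact hvf'.trans hwf'
        · rintro rfl
          exact Set.disjoint_left.1 hij (hvw ▸ hvi) hvj
      · exact ⟨v, ⟨hO'O (hnO hvn), hvf.trans hwf', hvR⟩, hvw⟩
    let := TopologicalSpace.upgradeIsCompletelyMetrizable Z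
    obtain ⟨g, hgr, -, hgi⟩ :=
      (Perfect.mk hCc hCp).exists_nat_bool_injection ⟨z, rfl, hzR⟩
    have h1 : (range g).Countable := (hcount (f z)).mono (hgr.trans inter_subset_left)
    have h2 : Countable (ℕ → Bool) := by
      have := h1.to_subtype
      exact (Equiv.ofInjective g hgi).countable_iff.2 this
    obtain ⟨e, he⟩ := exists_surjective_nat (ℕ → Bool)
    obtain ⟨n, hn⟩ := he (fun n => !(e n n))
    have h3 := congrFun hn n
    revert h3
    cases e n n <;> simp
  exact (hRg.union hrest).mono (fun z _ => by
    by_cases h : z ∈ R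
    · exact Or.inl h
    · exact Or.inr h)

theorem good_univ {X Z : Type*} [MeasurableSpace X] [StandardBorelSpace X]
    [MeasurableSpace Z] [StandardBorelSpace Z] (μ : Measure X) [IsFiniteMeasure μ] (f : Z → X)
    (hf : Measurable f) (hcount : ∀ x, (f ⁻¹' {x}).Countable) : GoodSet μ f univ := by
  let := upgradeStandardBorel X
  let := upgradeStandardBorel Z
  have hbor0 := BorelSpace.measurable_eq (α := Z)
  have hp0 : PolishSpace Z := inferInstance
  obtain ⟨t', ht', hfc, hp⟩ := hf.exists_continuous
  have hbor : ‹MeasurableSpace Z› = @borel Z t' := by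
    refine hbor0.trans ?_
    exact (borel_eq_borel_of_le hp hp0 ht').symm
  let := t'
  have := hp
  have : BorelSpace Z := ⟨hbor⟩
  exact good_univ_of_continuous μ f hfc hcount

open Classical in
theorem exists_split {X : Type*} [MeasurableSpace X] [StandardBorelSpace X] :
    ∃ D : Option (ℕ × Bool) → Set (X × X), (∀ o, MeasurableSet (D o)) ∧ (∀ p, ∃ o, p ∈ D o) ∧
      ∀ o, (∀ p ∈ D o, p.1 = p.2) ∨ (∃ S : Set X, ∀ p ∈ D o, p.1 ∈ S ∧ p.2 ∉ S) := by
  obtain ⟨S, hS, hsep⟩ := exists_seq_separating X (p := MeasurableSet) MeasurableSet.empty univ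
  let D : Option (ℕ × Bool) → Set (X × X) := fun o =>
    match o with
    | none => {p | p.1 = p.2}
    | some (n, true) => S n ×ˢ (S n)ᶜ
    | some (n, false) => (S n)ᶜ ×ˢ S n
  refine ⟨D, ?_, ?_, ?_⟩
  · rintro (_ | ⟨n, _ | _⟩)
    · exact measurableSet_eq_fun measurable_fst measurable_snd
    · exact (hS n).compl.prod (hS n)
    · exact (hS n).prod (hS n).compl
  · rintro ⟨x, y⟩
    by_contra! h
    have h0 : x ≠ y := h none
    apply h0
    apply hsep x (mem_univ _) y (mem_univ _)
    intro n
    have h1 := h (some (n, true))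
    have h2 := h (some (n, false))
    simp only [D, mem_prod, mem_compl_iff] at h1 h2
    tauto
  · rintro (_ | ⟨n, _ | _⟩)
    · exact Or.inl fun p hp => hp
    · exact Or.inr ⟨(S n)ᶜ, fun p hp => ⟨hp.1, fun h => h hp.2⟩⟩
    · exact Or.inr ⟨S n, fun p hp => ⟨hp.1, hp.2⟩⟩

theorem emb_of_injOn {X : Type*} [MeasurableSpace X] [StandardBorelSpace X] {B : Set (X × X)}
    (hB : MeasurableSet B) {f : X × X → X} (hf : Measurable f) (h : InjOn f B) :
    MeasurableEmbedding (fun c : B => f c.1) := by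
  have : StandardBorelSpace B := hB.standardBorel
  exact (hf.comp measurable_subtype_coe).measurableEmbedding (injOn_iff_injective.1 h)

/-- `GoodSet` transported from a subtype to the ambient space. -/
theorem good_of_subset {X : Type*} [MeasurableSpace X] [StandardBorelSpace X] {R : Set (X × X)}
    (hR : MeasurableSet R) (μ : Measure X) [IsFiniteMeasure μ] {f : X × X → X}
    (hf : Measurable f) (hcount : ∀ x, {p ∈ R | f p = x}.Countable) :
    ∃ N : Set X, μ N = 0 ∧ ∃ B : ℕ → Set (X × X), (∀ n, MeasurableSet (B n)) ∧
      (∀ n, B n ⊆ R) ∧ (∀ n, InjOn f (B n)) ∧ ∀ p ∈ R, f p ∉ N → ∃ n, p ∈ B n := by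
  have : StandardBorelSpace R := hR.standardBorel
  obtain ⟨N, hN, B, h1, h2, h3⟩ := good_univ μ (fun c : R => f c.1)
    (hf.comp measurable_subtype_coe) (by
      intro x
      have := (hcount x).preimage (f := fun c : R => c.1) Subtype.val_injective
      refine this.mono ?_
      intro c hc
      exact ⟨c.2, hc⟩)
  refine ⟨N, hN, fun n => Subtype.val '' (B n), fun n => hR.subtype_image (h1 n), ?_, ?_, ?_⟩
  · rintro n _ ⟨c, -, rfl⟩
    exact c.2
  · rintro n _ ⟨c, hc, rfl⟩ _ ⟨c', hc', rfl⟩ h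
    rw [h2 n hc hc' h]
  · intro p hp hpN
    obtain ⟨n, hn⟩ := h3 ⟨p, hp⟩ (mem_univ _) hpN
    exact ⟨n, ⟨p, hp⟩, hn, rfl⟩

/-- A measurable piece of `R` on which both projections are injective, and which lies either on
the diagonal or in a rectangle with disjoint sides. -/
structure IsPiece {X : Type*} [MeasurableSpace X] (R C : Set (X × X)) : Prop where
  meas : MeasurableSet C
  sub : C ⊆ R
  inj1 : InjOn Prod.fst C
  inj2 : InjOn Prod.snd C
  split : (∀ p ∈ C, p.1 = p.2) ∨ (∃ S : Set X, ∀ p ∈ C, p.1 ∈ S ∧ p.2 ∉ S)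

theorem IsPiece.mono {X : Type*} [MeasurableSpace X] {R C C' : Set (X × X)} (h : IsPiece R C)
    (hC' : MeasurableSet C') (hs : C' ⊆ C) : IsPiece R C' where
  meas := hC'
  sub := hs.trans h.sub
  inj1 := h.inj1.mono hs
  inj2 := h.inj2.mono hs
  split := by
    rcases h.split with h | ⟨S, h⟩
    · exact Or.inl fun p hp => h p (hs hp)
    · exact Or.inr ⟨S, fun p hp => h p (hs hp)⟩

/-- Feldman-Moore, up to null sets. -/
theorem ae_feldman_moore {X : Type*} [MeasurableSpace X] [StandardBorelSpace X] {R : Set (X × X)}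
    (hR : MeasurableSet R) (μ : Measure X) [IsFiniteMeasure μ]
    (hc1 : ∀ x, {p ∈ R | p.1 = x}.Countable) (hc2 : ∀ x, {p ∈ R | p.2 = x}.Countable) :
    ∃ C : ℕ → Set (X × X), (∀ k, IsPiece R (C k)) ∧ Pairwise (Function.onFun Disjoint C) ∧
      ∃ N : Set X, μ N = 0 ∧ ∀ p ∈ R, p.1 ∉ N → ∃ k, p ∈ C k := by
  obtain ⟨N, hN, B, hBm, hBR, hBi, hBc⟩ := good_of_subset hR μ measurable_fst hc1
  have hemb := fun n => emb_of_injOn (hBm n) measurable_fst (hBi n)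
  let α : (n : ℕ) → Measure (B n) := fun n => μ.comap (fun c : B n => c.1.1)
  have hα : ∀ n, IsFiniteMeasure (α n) := fun n => ⟨by
    simp only [α]
    rw [(hemb n).comap_apply]
    exact measure_lt_top _ _⟩
  let ν : Measure X := Measure.sum fun n => (α n).map (fun c : B n => c.1.2)
  obtain ⟨N', hN', B', hBm', hBR', hBi', hBc'⟩ := good_of_subset hR ν.toFinite measurable_snd hc2
  have hνN' : ν (toMeasurable ν.toFinite N') = 0 :=
    absolutelyContinuous_toFinite ν (by rw [measure_toMeasurable, hN'])
  have hnull : ∀ n, μ ((fun c : B n => c.1.1) ''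
      ((fun c : B n => c.1.2) ⁻¹' (toMeasurable ν.toFinite N'))) = 0 := by
    intro n
    rw [← (hemb n).comap_apply]
    rw [Measure.sum_apply_eq_zero] at hνN'
    have := hνN' n
    have hmm : Measurable fun c : B n => c.1.2 := measurable_snd.comp measurable_subtype_coe
    rwa [Measure.map_apply hmm (measurableSet_toMeasurable _ _)] at this
  obtain ⟨D, hDm, hDc, hDs⟩ := exists_split (X := X)
  let P : (ℕ × ℕ) × Option (ℕ × Bool) → Set (X × X) := fun i => B i.1.1 ∩ B' i.1.2 ∩ D i.2
  have hP : ∀ i, IsPiece R (P i) := by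
    intro i
    refine ⟨((hBm _).inter (hBm' _)).inter (hDm _), fun p hp => hBR _ hp.1.1,
      (hBi i.1.1).mono fun p hp => hp.1.1, (hBi' i.1.2).mono fun p hp => hp.1.2, ?_⟩
    rcases hDs i.2 with h | ⟨S, h⟩
    · exact Or.inl fun p hp => h p hp.2
    · exact Or.inr ⟨S, fun p hp => h p hp.2⟩
  obtain ⟨e, he⟩ := exists_surjective_nat ((ℕ × ℕ) × Option (ℕ × Bool))
  refine ⟨disjointed (fun k => P (e k)), fun k => (hP (e k)).mono ?_ (disjointed_subset _ k),
    disjoint_disjointed _, N ∪ ⋃ n, (fun c : B n => c.1.1) ''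
      ((fun c : B n => c.1.2) ⁻¹' (toMeasurable ν.toFinite N')), ?_, ?_⟩
  · exact MeasurableSet.disjointed (fun k => (hP (e k)).meas) k
  · exact measure_union_null hN (measure_iUnion_null hnull)
  · intro p hp hpN
    rw [← mem_iUnion, iUnion_disjointed, mem_iUnion]
    obtain ⟨n, hn⟩ := hBc p hp (fun h => hpN (Or.inl h))
    obtain ⟨m, hm⟩ := hBc' p hp (fun h => hpN (Or.inr (mem_iUnion.2
      ⟨n, ⟨p, hn⟩, subset_toMeasurable _ _ h, rfl⟩)))
    obtain ⟨o, ho⟩ := hDc p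
    obtain ⟨k, hk⟩ := he ((n, m), o)
    exact ⟨k, by rw [hk]; exact ⟨⟨hn, hm⟩, ho⟩⟩

theorem IsPiece.emb1 {X : Type*} [MeasurableSpace X] [StandardBorelSpace X] {R C : Set (X × X)}
    (h : IsPiece R C) : MeasurableEmbedding (fun c : C => c.1.1) :=
  emb_of_injOn h.meas measurable_fst h.inj1

theorem IsPiece.emb2 {X : Type*} [MeasurableSpace X] [StandardBorelSpace X] {R C : Set (X × X)}
    (h : IsPiece R C) : MeasurableEmbedding (fun c : C => c.1.2) :=
  emb_of_injOn h.meas measurable_snd h.inj2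

theorem IsPiece.exists_equiv {X : Type*} [MeasurableSpace X] [StandardBorelSpace X]
    {E : X → X → Prop} (hE : Equivalence E) {C : Set (X × X)}
    (h : IsPiece {p | E p.1 p.2} C) :
    ∃ T : X ≃ᵐ X, (∀ x, E (T x) x) ∧ ∀ c ∈ C, T c.2 = c.1 := by
  rcases h.split with hd | ⟨S, hS⟩
  · exact ⟨MeasurableEquiv.refl X, fun x => hE.refl x, fun c hc => (hd c hc).symm⟩
  have ha := h.emb1
  have hb := h.emb2
  let T : X → X := Function.extend (fun c : C => c.1.1) (fun c : C => c.1.2)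
    (Function.extend (fun c : C => c.1.2) (fun c : C => c.1.1) id)
  have hT : Measurable T :=
    ha.measurable_extend hb.measurable (hb.measurable_extend ha.measurable measurable_id)
  have hTa : ∀ c ∈ C, T c.1 = c.2 := fun c hc => ha.injective.extend_apply _ _ ⟨c, hc⟩
  have hTb : ∀ c ∈ C, T c.2 = c.1 := by
    intro c hc
    have h1 : ¬ ∃ d : C, d.1.1 = c.2 := by
      rintro ⟨d, hd⟩
      exact (hS c hc).2 (hd ▸ (hS d.1 d.2).1)
    have h2 : T c.2 = Function.extend (fun c : C => c.1.2) (fun c : C => c.1.1) id c.2 :=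
      Function.extend_apply' _ _ _ h1
    rw [h2]
    exact hb.injective.extend_apply _ _ (⟨c, hc⟩ : C)
  have hTo : ∀ x, (¬ ∃ d : C, d.1.1 = x) → (¬ ∃ d : C, d.1.2 = x) → T x = x := by
    intro x h1 h2
    have h3 : T x = Function.extend (fun c : C => c.1.2) (fun c : C => c.1.1) id x :=
      Function.extend_apply' _ _ _ h1
    rw [h3]
    exact Function.extend_apply' _ _ _ h2
  have key : ∀ x, T (T x) = x ∧ E (T x) x := by
    intro x
    by_cases h1 : ∃ d : C, d.1.1 = x
    · obtain ⟨d, rfl⟩ := h1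
      rw [hTa _ d.2, hTb _ d.2]
      exact ⟨rfl, hE.symm (h.sub d.2)⟩
    by_cases h2 : ∃ d : C, d.1.2 = x
    · obtain ⟨d, rfl⟩ := h2
      rw [hTb _ d.2, hTa _ d.2]
      exact ⟨rfl, h.sub d.2⟩
    rw [hTo x h1 h2, hTo x h1 h2]
    exact ⟨rfl, hE.refl x⟩
  exact ⟨⟨⟨T, T, fun x => (key x).1, fun x => (key x).1⟩, hT, hT⟩, fun x => (key x).2, hTb⟩

theorem lintegral_extend_zero {X Y : Type*} [MeasurableSpace X] [MeasurableSpace Y]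
    (μ : Measure X) {f : Y → X} (hf : MeasurableEmbedding f) {k : Y → ℝ≥0∞} (hk : Measurable k) :
    ∫⁻ x, Function.extend f k 0 x ∂μ = ∫⁻ y, k y ∂(μ.comap f) := by
  have hm : Measurable (Function.extend f k 0) := hf.measurable_extend hk measurable_const
  have h1 : Function.extend f k 0 = (range f).indicator (Function.extend f k 0) := by
    ext x
    by_cases hx : x ∈ range f
    · rw [indicator_of_mem hx]
    · rw [indicator_of_notMem hx, Function.extend_apply' _ _ _ hx]
      rfl
  rw [h1, lintegral_indicator hf.measurableSet_range, ← hf.map_comap,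
    lintegral_map hm hf.measurable]
  simp only [hf.injective.extend_apply]

theorem IsPiece.tsum1 {X : Type*} [MeasurableSpace X] {R C : Set (X × X)}
    (h : IsPiece R C) (g : X × X → ℝ≥0∞) :
    (fun x => ∑' y, C.indicator g (x, y)) =
      Function.extend (fun c : C => c.1.1) (fun c : C => g c.1) 0 := by
  have hi : Function.Injective (fun c : C => c.1.1) := injOn_iff_injective.1 h.inj1
  ext x
  by_cases hx : ∃ c : C, c.1.1 = x
  · obtain ⟨c, rfl⟩ := hx
    have h0 : Function.extend (fun c : C => c.1.1) (fun c : C => g c.1) 0 c.1.1 = g c.1 :=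
      hi.extend_apply _ _ c
    rw [h0, tsum_eq_single c.1.2]
    · exact indicator_of_mem c.2 g
    · intro y hy
      apply indicator_of_notMem
      intro hyC
      exact hy (congrArg Prod.snd (h.inj1 hyC c.2 rfl))
  · rw [Function.extend_apply' _ _ _ hx]
    simp only [Pi.zero_apply, ENNReal.tsum_eq_zero]
    intro y
    apply indicator_of_notMem
    intro hyC
    exact hx ⟨⟨_, hyC⟩, rfl⟩

theorem IsPiece.tsum2 {X : Type*} [MeasurableSpace X] {R C : Set (X × X)}
    (h : IsPiece R C) (g : X × X → ℝ≥0∞) :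
    (fun x => ∑' y, C.indicator g (y, x)) =
      Function.extend (fun c : C => c.1.2) (fun c : C => g c.1) 0 := by
  have hi : Function.Injective (fun c : C => c.1.2) := injOn_iff_injective.1 h.inj2
  ext x
  by_cases hx : ∃ c : C, c.1.2 = x
  · obtain ⟨c, rfl⟩ := hx
    have h0 : Function.extend (fun c : C => c.1.2) (fun c : C => g c.1) 0 c.1.2 = g c.1 :=
      hi.extend_apply _ _ c
    rw [h0, tsum_eq_single c.1.1]
    · exact indicator_of_mem c.2 g
    · intro y hy
      apply indicator_of_notMem
      intro hyC
      exact hy (congrArg Prod.fst (h.inj2 hyC c.2 rfl))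
  · rw [Function.extend_apply' _ _ _ hx]
    simp only [Pi.zero_apply, ENNReal.tsum_eq_zero]
    intro y
    apply indicator_of_notMem
    intro hyC
    exact hx ⟨⟨_, hyC⟩, rfl⟩

theorem piece_lintegral {X : Type*} [MeasurableSpace X] [StandardBorelSpace X]
    {E : X → X → Prop} (hE : Equivalence E) {ρ : X → X → ℝ}
    (hρ : Measurable (fun p : X × X => ρ p.1 p.2)) {μ : Measure X}
    (hinv : IsInvariant E ρ μ) {C : Set (X × X)} (h : IsPiece {p | E p.1 p.2} C)
    {g : X × X → ℝ≥0∞} (hg : Measurable g) :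
    ∫⁻ c, g c.1 ∂(μ.comap (fun c : C => c.1.1)) =
      ∫⁻ c, g c.1 * ENNReal.ofReal (ρ c.1.1 c.1.2) ∂(μ.comap (fun c : C => c.1.2)) := by
  have ha := h.emb1
  have hb := h.emb2
  have hr : Measurable (fun c : C => ENNReal.ofReal (ρ c.1.1 c.1.2)) :=
    (ENNReal.measurable_ofReal.comp hρ).comp measurable_subtype_coe
  have key : μ.comap (fun c : C => c.1.1) = (μ.comap (fun c : C => c.1.2)).withDensity
      (fun c : C => ENNReal.ofReal (ρ c.1.1 c.1.2)) := by
    obtain ⟨T, hTE, hTC⟩ := h.exists_equiv hE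
    ext S hS
    rw [ha.comap_apply, withDensity_apply _ hS]
    have h1 : (fun c : C => c.1.1) '' S = T '' ((fun c : C => c.1.2) '' S) := by
      rw [image_image]
      exact image_congr fun c _ => (hTC c.1 c.2).symm
    rw [h1, hinv T hTE _ (hb.measurableSet_image.2 hS),
      ← Measure.restrict_restrict_of_subset (image_subset_range (fun c : C => c.1.2) S),
      ← hb.map_comap, hb.restrict_map, preimage_image_eq _ hb.injective, hb.lintegral_map]
    exact lintegral_congr fun c => by rw [hTC c.1 c.2]
  have hgc : Measurable fun c : C => g c.1 := hg.comp measurable_subtype_coe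
  rw [key, lintegral_withDensity_eq_lintegral_mul _ hr hgc]
  exact lintegral_congr fun c => mul_comm _ _

theorem transport_package {X : Type*} [MeasurableSpace X] [StandardBorelSpace X]
    {E : X → X → Prop} (hE : IsCBER E) {ρ : X → X → ℝ}
    (hρ : Measurable (fun p : X × X => ρ p.1 p.2)) {μ : Measure X} [IsFiniteMeasure μ]
    (hinv : IsInvariant E ρ μ) :
    (∀ P : X → Prop, (∀ᵐ x ∂μ, P x) → ∀ᵐ x ∂μ, ∀ y, E x y → P y) ∧
    (∀ g : X × X → ℝ≥0∞, Measurable g →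
      AEMeasurable (fun x => ∑' y, {p : X × X | E p.1 p.2}.indicator g (y, x)) μ) ∧
    (∀ g : X × X → ℝ≥0∞, Measurable g →
      ∫⁻ x, ∑' y, {p : X × X | E p.1 p.2}.indicator g (x, y) ∂μ =
      ∫⁻ x, ∑' y, {p : X × X | E p.1 p.2}.indicator
        (fun p => g p * ENNReal.ofReal (ρ p.1 p.2)) (y, x) ∂μ) := by
  obtain ⟨hEq, hEm, hEc⟩ := hE
  obtain ⟨C, hC, hdis, N, hN, hcov⟩ := ae_feldman_moore hEm μ
    (fun x => ((hEc x).image (fun y => (x, y))).mono (by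
      rintro ⟨a, b⟩ ⟨hab, rfl⟩
      exact ⟨b, hab, rfl⟩))
    (fun x => ((hEc x).image (fun y => (y, x))).mono (by
      rintro ⟨a, b⟩ ⟨hab, rfl⟩
      exact ⟨a, hEq.symm hab, rfl⟩))
  have hNae : ∀ᵐ x ∂μ, x ∉ N := measure_eq_zero_iff_ae_notMem.1 hN
  have T3 : ∀ P : X → Prop, (∀ᵐ x ∂μ, P x) → ∀ᵐ x ∂μ, ∀ y, E x y → P y := by
    intro P hP
    obtain ⟨A, hA, hAm, hA0⟩ := exists_measurable_superset_of_null (ae_iff.1 hP)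
    have hz : ∀ k, ∀ᵐ x ∂μ,
        x ∉ (fun c : C k => c.1.1) '' ((fun c : C k => c.1.2) ⁻¹' A) := by
      intro k
      refine measure_eq_zero_iff_ae_notMem.1 ?_
      have hpm : MeasurableSet ((fun c : C k => c.1.2) ⁻¹' A) := (hC k).emb2.measurable hAm
      have hA2 : MeasurableSet (Prod.snd ⁻¹' A : Set (X × X)) := measurable_snd hAm
      have h1 := piece_lintegral hEq hρ hinv (hC k)
        (g := (Prod.snd ⁻¹' A).indicator 1) (measurable_one.indicator hA2)
      have h2 : ∫⁻ c, (Prod.snd ⁻¹' A).indicator (1 : X × X → ℝ≥0∞) c.1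
          ∂(μ.comap (fun c : C k => c.1.1)) =
          μ ((fun c : C k => c.1.1) '' ((fun c : C k => c.1.2) ⁻¹' A)) := by
        rw [← (hC k).emb1.comap_apply, ← lintegral_indicator_one hpm]
        rfl
      rw [← h2, h1]
      have h3 : (μ.comap (fun c : C k => c.1.2)) ((fun c : C k => c.1.2) ⁻¹' A) = 0 := by
        rw [(hC k).emb2.comap_preimage]
        exact measure_mono_null inter_subset_left hA0
      rw [← nonpos_iff_eq_zero, ← lintegral_zero (μ := μ.comap (fun c : C k => c.1.2))]
      apply lintegral_mono_ae
      filter_upwards [measure_eq_zero_iff_ae_notMem.1 h3] with c hc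
      have : c.1 ∉ (Prod.snd ⁻¹' A : Set (X × X)) := hc
      rw [indicator_of_notMem this, zero_mul]
    filter_upwards [ae_all_iff.2 hz, hNae] with x hx hxN y hxy
    by_contra hPy
    obtain ⟨k, hk⟩ := hcov (x, y) hxy hxN
    exact hx k ⟨⟨(x, y), hk⟩, hA hPy, rfl⟩
  have hU : ∀ (g : X × X → ℝ≥0∞) (p : X × X),
      (⋃ k, C k).indicator g p = ∑' k, (C k).indicator g p := by
    intro g p
    by_cases hp : ∃ k, p ∈ C k
    · obtain ⟨k, hk⟩ := hp
      rw [indicator_of_mem (mem_iUnion.2 ⟨k, hk⟩), tsum_eq_single k, indicator_of_mem hk]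
      intro j hj
      exact indicator_of_notMem (fun h => Set.disjoint_left.1 (hdis hj) h hk) _
    · have h0 : ∀ k, (C k).indicator g p = 0 :=
        fun k => indicator_of_notMem (fun h => hp ⟨k, h⟩) _
      rw [indicator_of_notMem (fun h => hp (mem_iUnion.1 h)), ENNReal.tsum_eq_zero.2 h0]
  have hUeq : ∀ (g : X × X → ℝ≥0∞) (p : X × X), (E p.1 p.2 → p.1 ∉ N) →
      {p : X × X | E p.1 p.2}.indicator g p = ∑' k, (C k).indicator g p := by
    intro g p hp
    rw [← hU]
    by_cases hpE : E p.1 p.2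
    · obtain ⟨k, hk⟩ := hcov p hpE (hp hpE)
      rw [indicator_of_mem (s := {p : X × X | E p.1 p.2}) hpE,
        indicator_of_mem (mem_iUnion.2 ⟨k, hk⟩)]
    · rw [indicator_of_notMem (s := {p : X × X | E p.1 p.2}) hpE, indicator_of_notMem]
      intro h
      obtain ⟨k, hk⟩ := mem_iUnion.1 h
      exact hpE ((hC k).sub hk)
  have S1 : ∀ g : X × X → ℝ≥0∞,
      (fun x => ∑' y, {p : X × X | E p.1 p.2}.indicator g (x, y)) =ᵐ[μ]
      fun x => ∑' k, ∑' y, (C k).indicator g (x, y) := by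
    intro g
    filter_upwards [hNae] with x hx
    rw [ENNReal.tsum_comm]
    exact tsum_congr fun y => hUeq g (x, y) fun _ => hx
  have S2 : ∀ g : X × X → ℝ≥0∞,
      (fun x => ∑' y, {p : X × X | E p.1 p.2}.indicator g (y, x)) =ᵐ[μ]
      fun x => ∑' k, ∑' y, (C k).indicator g (y, x) := by
    intro g
    filter_upwards [T3 _ hNae] with x hx
    rw [ENNReal.tsum_comm]
    exact tsum_congr fun y => hUeq g (y, x) fun h => hx y (hEq.symm h)
  have M1 : ∀ g : X × X → ℝ≥0∞, Measurable g → ∀ k,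
      Measurable fun x => ∑' y, (C k).indicator g (x, y) := by
    intro g hg k
    rw [(hC k).tsum1]
    exact (hC k).emb1.measurable_extend (hg.comp measurable_subtype_coe) measurable_const
  have M2 : ∀ g : X × X → ℝ≥0∞, Measurable g → ∀ k,
      Measurable fun x => ∑' y, (C k).indicator g (y, x) := by
    intro g hg k
    rw [(hC k).tsum2]
    exact (hC k).emb2.measurable_extend (hg.comp measurable_subtype_coe) measurable_const
  refine ⟨T3, ?_, ?_⟩
  · intro g hg
    exact ⟨_, Measurable.tsum (M2 g hg), S2 g⟩
  · intro g hg
    have hg' : Measurable fun p : X × X => g p * ENNReal.ofReal (ρ p.1 p.2) :=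
      hg.mul (ENNReal.measurable_ofReal.comp hρ)
    rw [lintegral_congr_ae (S1 g), lintegral_congr_ae (S2 _),
      lintegral_tsum fun k => (M1 g hg k).aemeasurable,
      lintegral_tsum fun k => (M2 _ hg' k).aemeasurable]
    refine tsum_congr fun k => ?_
    rw [(hC k).tsum1, (hC k).tsum2]
    refine (lintegral_extend_zero μ (hC k).emb1 (hg.comp measurable_subtype_coe)).trans ?_
    refine Eq.trans ?_
      (lintegral_extend_zero μ (hC k).emb2 (hg'.comp measurable_subtype_coe)).symm
    exact piece_lintegral hEq hρ hinv (hC k) hg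

theorem no_measure {X : Type*} [MeasurableSpace X] [StandardBorelSpace X]
    (E : X → X → Prop) (hE : IsCBER E)
    (ρ : X → X → ℝ) (hρ : IsCocycle E ρ)
    (F : X → X → Prop) (hF : IsFinSubequiv E F)
    (φ : X → X) (hφ : Measurable φ) (hcomp : CompressionOver E F ρ φ)
    (μ : Measure X) [IsProbabilityMeasure μ] (hinv : IsInvariant E ρ μ) : False := by
  obtain ⟨T3, TM, TI⟩ := transport_package hE hρ.1 hinv
  obtain ⟨hEq, hEm, hEc⟩ := hE
  obtain ⟨hρm, hρpos, hρc⟩ := hρ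
  obtain ⟨hFq, hFm, hFE, hFf⟩ := hF
  obtain ⟨hφE, hle, hlt⟩ := hcomp
  have hrm : Measurable fun p : X × X => ENNReal.ofReal (ρ p.1 p.2) :=
    ENNReal.measurable_ofReal.comp hρm
  have hone : ∀ x, ρ x x = 1 := by
    intro x
    have h1 := hρc (hEq.refl x) (hEq.refl x)
    have h2 := hρpos (hEq.refl x)
    nlinarith [mul_self_eq_zero.1 (show (ρ x x - 1) * (ρ x x - 1) = 0 by nlinarith)]
  let w : X → ℝ≥0∞ := fun z => eSize ρ {y | F y z} z
  have hw : ∀ z, w z = ∑' y, {y | F y z}.indicator (fun y => ENNReal.ofReal (ρ y z)) y :=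
    fun z => tsum_subtype {y | F y z} (fun y => ENNReal.ofReal (ρ y z))
  have hw0 : ∀ z, w z ≠ 0 := by
    intro z h0
    have h1 : ENNReal.ofReal (ρ z z) = 0 :=
      (ENNReal.tsum_eq_zero.1 h0) (⟨z, hFq.refl z⟩ : {y | F y z})
    rw [hone] at h1
    simp at h1
  have hwtop : ∀ z, w z ≠ ⊤ := by
    intro z
    have hfin : {y | F y z}.Finite := (hFf z).subset fun y hy => hFq.symm hy
    have : Fintype {y | F y z} := hfin.fintype
    have h1 : w z = ∑ y : {y | F y z}, ENNReal.ofReal (ρ y z) := tsum_fintype _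
    rw [h1]
    exact ENNReal.sum_ne_top.2 fun _ _ => ENNReal.ofReal_ne_top
  have hwz : ∀ u z, F u z → (w z)⁻¹ = ENNReal.ofReal (ρ z u) * (w u)⁻¹ := by
    intro u z huz
    have h1 : w z = ENNReal.ofReal (ρ u z) * w u := by
      rw [hw, hw, ← ENNReal.tsum_mul_left]
      refine tsum_congr fun y => ?_
      by_cases hy : F y u
      · have hyz : F y z := hFq.trans hy huz
        rw [indicator_of_mem (s := {y | F y z}) hyz, indicator_of_mem (s := {y | F y u}) hy,
          hρc (hFE hy) (hFE huz), ENNReal.ofReal_mul (hρpos (hFE hy)).le, mul_comm]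
      · have hyz : ¬ F y z := fun h => hy (hFq.trans h (hFq.symm huz))
        rw [indicator_of_notMem (s := {y | F y z}) hyz,
          indicator_of_notMem (s := {y | F y u}) hy, mul_zero]
    have h2 : ρ z u = (ρ u z)⁻¹ := by
      have h3 := hρc (hFE huz) (hFE (hFq.symm huz))
      rw [hone] at h3
      exact eq_inv_of_mul_eq_one_right h3.symm
    rw [h1, h2, ENNReal.ofReal_inv_of_pos (hρpos (hFE huz)),
      ENNReal.mul_inv (Or.inr (hwtop u)) (Or.inl ENNReal.ofReal_ne_top)]
  have hsum : ∀ u, ∑' z, {z | F u z}.indicator (fun z => (w z)⁻¹) z = 1 := by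
    intro u
    have h1 : ∀ z, {z | F u z}.indicator (fun z => (w z)⁻¹) z =
        {y | F y u}.indicator (fun y => ENNReal.ofReal (ρ y u)) z * (w u)⁻¹ := by
      intro z
      by_cases hz : F u z
      · rw [indicator_of_mem (s := {z | F u z}) hz,
          indicator_of_mem (s := {y | F y u}) (hFq.symm hz), hwz u z hz]
      · rw [indicator_of_notMem (s := {z | F u z}) hz,
          indicator_of_notMem (s := {y | F y u}) (fun h => hz (hFq.symm h)), zero_mul]
    rw [tsum_congr h1, ENNReal.tsum_mul_right, ← hw]
    exact ENNReal.mul_inv_cancel (hw0 u) (hwtop u)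
  have hwm : AEMeasurable w μ := by
    have h1 := TM _ (hrm.indicator hFm)
    refine h1.congr (Eventually.of_forall fun z => ?_)
    dsimp only
    rw [hw]
    refine tsum_congr fun y => ?_
    by_cases hy : F y z
    · rw [indicator_of_mem (s := {p : X × X | E p.1 p.2}) (hFE hy),
        indicator_of_mem (s := {p : X × X | F p.1 p.2}) hy,
        indicator_of_mem (s := {y | F y z}) hy]
    · rw [indicator_of_notMem (s := {y | F y z}) hy]
      by_cases hy' : E y z
      · rw [indicator_of_mem (s := {p : X × X | E p.1 p.2}) hy',
          indicator_of_notMem (s := {p : X × X | F p.1 p.2}) hy]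
      · rw [indicator_of_notMem (s := {p : X × X | E p.1 p.2}) hy']
  let w' : X → ℝ≥0∞ := hwm.mk w
  have hw'm : Measurable w' := hwm.measurable_mk
  have hww' : ∀ᵐ z ∂μ, w z = w' z := hwm.ae_eq_mk
  let G : Set (X × X) := {p | F (φ p.1) p.2}
  have hG : MeasurableSet G :=
    ((hφ.comp measurable_fst).prodMk measurable_snd : Measurable fun p : X × X =>
      (φ p.1, p.2)) hFm
  have hGE : ∀ x z, F (φ x) z → E x z := fun x z h => hEq.trans (hφE x) (hFE h)
  let g : X × X → ℝ≥0∞ := G.indicator fun p => (w' p.2)⁻¹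
  have hg : Measurable g := ((hw'm.comp measurable_snd).inv).indicator hG
  have hg' : Measurable fun p : X × X => g p * ENNReal.ofReal (ρ p.1 p.2) := hg.mul hrm
  let s : X → ℝ≥0∞ := fun z => relSize ρ (φ ⁻¹' {y | F y z}) {y | F y z} z
  have hleft : ∀ᵐ x ∂μ, ∑' z, {p : X × X | E p.1 p.2}.indicator g (x, z) = 1 := by
    filter_upwards [T3 _ hww'] with x hx
    rw [← hsum (φ x)]
    refine tsum_congr fun z => ?_
    by_cases hz : F (φ x) z
    · have hzG : (x, z) ∈ G := hz
      rw [indicator_of_mem (s := {p : X × X | E p.1 p.2}) (hGE x z hz),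
        indicator_of_mem (s := {z | F (φ x) z}) hz, hx z (hGE x z hz)]
      exact indicator_of_mem hzG _
    · have hzG : (x, z) ∉ G := hz
      rw [indicator_of_notMem (s := {z | F (φ x) z}) hz]
      refine indicator_apply_eq_zero.2 fun _ => ?_
      exact indicator_of_notMem hzG _
  have hright : ∀ᵐ z ∂μ, ∑' x, {p : X × X | E p.1 p.2}.indicator
      (fun p => g p * ENNReal.ofReal (ρ p.1 p.2)) (x, z) = s z := by
    filter_upwards [hww'] with z hz
    have h1 : s z = (∑' x, (φ ⁻¹' {y | F y z}).indicator
        (fun y => ENNReal.ofReal (ρ y z)) x) * (w z)⁻¹ := by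
      rw [← tsum_subtype]
      exact div_eq_mul_inv _ _
    rw [h1, ← ENNReal.tsum_mul_right]
    refine tsum_congr fun x => ?_
    by_cases hx : F (φ x) z
    · have hzG : (x, z) ∈ G := hx
      have hgz : g (x, z) = (w' z)⁻¹ := indicator_of_mem hzG _
      rw [indicator_of_mem (s := {p : X × X | E p.1 p.2}) (hGE x z hx),
        indicator_of_mem (s := φ ⁻¹' {y | F y z}) hx, hgz, hz, mul_comm]
    · have hzG : (x, z) ∉ G := hx
      have hgz : g (x, z) = 0 := indicator_of_notMem hzG _
      rw [indicator_of_notMem (s := φ ⁻¹' {y | F y z}) hx, zero_mul]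
      refine indicator_apply_eq_zero.2 fun _ => ?_
      rw [hgz, zero_mul]
  have hint : ∫⁻ z, s z ∂μ = 1 := by
    rw [← lintegral_congr_ae hright, ← TI g hg, lintegral_congr_ae hleft]
    simp
  have hs1 : s =ᵐ[μ] fun _ => 1 := by
    refine ae_eq_of_ae_le_of_lintegral_le (Eventually.of_forall hle) ?_ aemeasurable_const ?_
    · change ∫⁻ z, s z ∂μ ≠ ⊤
      rw [hint]
      exact ENNReal.one_ne_top
    · change _ ≤ ∫⁻ z, s z ∂μ
      rw [hint]
      simp
  obtain ⟨x, hx⟩ := (T3 _ hs1).exists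
  obtain ⟨y, hxy, hy⟩ := hlt x
  exact hy.ne (hx y hxy)

end Helpers

/-- If there is a Borel compression of `ρ` over a finite Borel subequivalence relation of `E`,
then there is no `ρ`-invariant Borel probability measure. -/
theorem stmt10 [MeasurableSpace X] [StandardBorelSpace X]
    (E : X → X → Prop) (hE : IsCBER E)
    (ρ : X → X → ℝ) (hρ : IsCocycle E ρ)
    (F : X → X → Prop) (hF : IsFinSubequiv E F)
    (φ : X → X) (hφ : Measurable φ) (hcomp : CompressionOver E F ρ φ) :
    ¬ ∃ μ : Measure X, IsProbabilityMeasure μ ∧ IsInvariant E ρ μ := by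
  rintro ⟨μ, hμ, hinv⟩
  exact no_measure E hE ρ hρ F hF φ hφ hcomp μ hinv

end CocycleNadkarni
end
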